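/- arXiv:1402.6357 — 2 statements merged into one kernel-verified Lean document; each statement's English description precedes it below -/
import Mathlib

section
/- Let q = 2^k + 1 for some integer k ≥ 2. Let L be a real vector subspace of the q×q complex matrices consisting entirely of Hermitian matrices, and suppose that every nonzero X ∈ L has at least 2 positive eigenvalues and at least 2 negative eigenvalues (counted with multiplicity). Then the real dimension of L is at most q² − (4q − 3). -/
open Matrix

/-- The number of positive eigenvalues (counted with multiplicity) of a Hermitian matrix. -/
noncomputable def posEigCount {n : Type*} [Fintype n] [DecidableEq n]
    {A : Matrix n n ℂ} (hA : A.IsHermitian) : ℕ :=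
  (Finset.univ.filter fun i => 0 < hA.eigenvalues i).card

/-- The number of negative eigenvalues (counted with multiplicity) of a Hermitian matrix. -/
noncomputable def negEigCount {n : Type*} [Fintype n] [DecidableEq n]
    {A : Matrix n n ℂ} (hA : A.IsHermitian) : ℕ :=
  (Finset.univ.filter fun i => hA.eigenvalues i < 0).card

open Matrix

/-! Part A: combinatorics -/
set_option linter.unusedSectionVars false
set_option linter.unusedSimpArgs false
namespace BU
open Finset

abbrev GG := Fin 3 → ZMod 2

def cle (a b : ℤ) : Prop := b = a ∨ (0 ≤ a ∧ b = a + 1) ∨ (a ≤ 0 ∧ b = a - 1)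

variable {ι : Type} [Fintype ι] [DecidableEq ι]

abbrev Vx (blk : ι → Fin 3) (m : ℕ) : Type :=
  {v : ι → ℤ // (∀ k, |v k| ≤ (m : ℤ)) ∧ ∀ b, ∃ k, blk k = b ∧ |v k| = (m : ℤ)}

noncomputable instance (blk : ι → Fin 3) (m : ℕ) : Fintype (Vx blk m) := by
  have : Finite (Vx blk m) := by
    have h : (Set.pi Set.univ (fun _ : ι => Set.Icc (-(m : ℤ)) m)).Finite :=
      Set.Finite.pi (fun _ => Set.finite_Icc _ _)
    refine (h.subset ?_ : {v : ι → ℤ | (∀ k, |v k| ≤ (m : ℤ)) ∧ ∀ b, ∃ k, blk k = b ∧ |v k| = (m : ℤ)}.Finite).to_subtype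
    intro v hv k _
    exact abs_le.1 (hv.1 k)
  exact Fintype.ofFinite _

variable {blk : ι → Fin 3} {m : ℕ}

def vle (x y : Vx blk m) : Prop := ∀ k, cle (x.1 k) (y.1 k)

def act (χ : ι → GG) (g : GG) (v : Vx blk m) : Vx blk m :=
  ⟨fun k => if χ k ⬝ᵥ g = 0 then v.1 k else - v.1 k, by
    constructor
    · intro k; have := v.2.1 k; dsimp only; split_ifs <;> simpa using this
    · intro b; obtain ⟨k, hk, h⟩ := v.2.2 b
      refine ⟨k, hk, ?_⟩; dsimp only; split_ifs <;> simpa using h⟩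

lemma act_act (χ : ι → GG) (g : GG) (v : Vx blk m) : act χ g (act χ g v) = v := by
  apply Subtype.ext; funext k; simp only [act]; split_ifs <;> simp

lemma vle_act (χ : ι → GG) (g : GG) (x y : Vx blk m) :
    vle (act χ g x) (act χ g y) ↔ vle x y := by
  unfold vle; apply forall_congr'; intro k; simp only [act, cle]
  split_ifs
  · rfl
  · omega

def Supp (J : Finset ι) (v : Vx blk m) : Prop := ∀ k, k ∉ J → v.1 k = 0

lemma supp_act (χ : ι → GG) (g : GG) (J : Finset ι) (x : Vx blk m) :
    Supp J (act χ g x) ↔ Supp J x := by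
  unfold Supp; apply forall_congr'; intro k; simp only [act]
  split_ifs <;> simp

def Chain (J : Finset ι) {n : ℕ} (σ : Fin n → Vx blk m) : Prop :=
  (∀ i, Supp J (σ i)) ∧ ∀ i j, i < j → vle (σ j) (σ i)

lemma chain_act (χ : ι → GG) (g : GG) (J : Finset ι) {n : ℕ} (σ : Fin n → Vx blk m) :
    Chain J (fun i => act χ g (σ i)) ↔ Chain J σ := by
  simp only [Chain, vle_act, supp_act]

def PP {r : ℕ} (s : Fin r → Vx blk m → ZMod 2) (σ : Fin (r+1) → Vx blk m) : ZMod 2 :=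
  ∏ i : Fin r, (s i (σ i.castSucc) + s i (σ i.succ))

open Classical in
noncomputable def ind (p : Prop) : ZMod 2 := if p then 1 else 0

lemma ind_pos {p : Prop} (h : p) : ind p = 1 := if_pos h
lemma ind_neg {p : Prop} (h : ¬ p) : ind p = 0 := if_neg h
lemma ind_and (p q : Prop) : ind (p ∧ q) = ind p * ind q := by
  by_cases hp : p <;> by_cases hq : q <;> simp [ind, hp, hq]
lemma ind_congr {p q : Prop} (h : p ↔ q) : ind p = ind q := by rw [propext h]

noncomputable def NN (κ : Vx blk m → GG) (J : Finset ι) {r : ℕ}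
    (s : Fin r → Vx blk m → ZMod 2) : ZMod 2 :=
  ∑ σ : Fin (r+1) → Vx blk m, ind (Chain J σ) * ind (κ (σ (Fin.last r)) = 0) * PP s σ

def IsCh (χ : ι → GG) (ψ : GG) (s : Vx blk m → ZMod 2) : Prop :=
  ∀ g v, s (act χ g v) = ψ ⬝ᵥ g + s v

lemma PP_cons {r : ℕ} (h : Vx blk m → ZMod 2) (s : Fin r → Vx blk m → ZMod 2)
    (x : Vx blk m) (σ : Fin (r+1) → Vx blk m) :
    PP (Fin.cons h s : Fin (r+1) → Vx blk m → ZMod 2) (Fin.cons x σ : Fin (r+2) → Vx blk m)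
      = (h x + h (σ 0)) * PP s σ := by
  unfold PP
  rw [Fin.prod_univ_succ]
  simp

lemma z2 (a : ZMod 2) : a + a = 0 := CharTwo.add_self_eq_zero a

lemma cocycle {r : ℕ} (s : Fin r → Vx blk m → ZMod 2) (σ : Fin (r+2) → Vx blk m) :
    ∑ i : Fin (r+2), PP s (i.removeNth σ) = 0 := by
  induction r with
  | zero => simp [PP, Fin.sum_univ_two]; rfl
  | succ r ih =>
    obtain ⟨s0, s', rfl⟩ : ∃ s0 s', s = Fin.cons s0 s' := ⟨s 0, Fin.tail s, (Fin.cons_self_tail s).symm⟩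
    obtain ⟨y, ρ, rfl⟩ : ∃ y ρ, σ = Fin.cons y ρ := ⟨σ 0, Fin.tail σ, (Fin.cons_self_tail σ).symm⟩
    obtain ⟨z, τ, rfl⟩ : ∃ y τ, ρ = Fin.cons y τ := ⟨ρ 0, Fin.tail ρ, (Fin.cons_self_tail ρ).symm⟩
    have h := ih s' (Fin.cons z τ)
    have key : ∀ (n : ℕ) (a : Vx blk m) (t : Fin (n+1) → Vx blk m) (i : Fin (n+1)),
        (i.succ).removeNth (Fin.cons a t : Fin (n+2) → Vx blk m) = Fin.cons a (i.removeNth t) := by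
      intro n a t i
      funext j
      refine Fin.cases ?_ (fun j => ?_) j
      · simp [Fin.removeNth]
      · simp [Fin.removeNth]
    have key0 : ∀ (n : ℕ) (a : Vx blk m) (t : Fin n → Vx blk m),
        (0 : Fin (n+1)).removeNth (Fin.cons a t : Fin (n+1) → Vx blk m) = t := by
      intro n a t
      funext j
      simp [Fin.removeNth]
    rw [Fin.sum_univ_succ, key0] at h
    rw [Fin.sum_univ_succ, Fin.sum_univ_succ, key0]
    simp only [key, key0, PP_cons] at h ⊢
    simp only [Fin.cons_zero, ← Finset.mul_sum]
    have h2 : ∑ i : Fin (r+1), PP s' (Fin.cons z (i.removeNth τ) : Fin (r+1) → Vx blk m) = PP s' τ := by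
      have := z2 (PP s' τ)
      rw [← this] at h
      exact add_left_cancel h
    rw [h2]
    have := z2 (s0 z); have := z2 (s0 y); have := z2 (s0 (τ 0))
    linear_combination (PP s' τ) * (z2 (s0 z)+z2 (s0 y)+z2 (s0 (τ 0)))

lemma cocycle2 {r : ℕ} (h : Vx blk m → ZMod 2) (s : Fin r → Vx blk m → ZMod 2)
    (σ : Fin (r+2) → Vx blk m) :
    ∑ i : Fin (r+2), h ((i.removeNth σ) 0) * PP s (i.removeNth σ) = PP (Fin.cons h s : Fin (r+1) → _) σ := by
  have H := cocycle s σ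
  obtain ⟨y, ρ, rfl⟩ : ∃ y ρ, σ = Fin.cons y ρ := ⟨σ 0, Fin.tail σ, (Fin.cons_self_tail σ).symm⟩
  rw [PP_cons]
  rw [Fin.sum_univ_succ] at H ⊢
  have e0 : (0 : Fin (r+2)).removeNth (Fin.cons y ρ : Fin (r+2) → Vx blk m) = ρ := by
    funext j; simp [Fin.removeNth]
  have e1 : ∀ i : Fin (r+1), ((i.succ).removeNth (Fin.cons y ρ : Fin (r+2) → Vx blk m)) 0 = y := by
    intro i; simp [Fin.removeNth]
  rw [e0] at H ⊢
  simp only [e1, ← Finset.mul_sum]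
  rw [eq_neg_of_add_eq_zero_right H]
  rw [CharTwo.neg_eq]; ring

lemma PP_deg {r : ℕ} (s : Fin r → Vx blk m → ZMod 2) (σ : Fin (r+1) → Vx blk m)
    (h : PP s σ ≠ 0) (i : Fin r) : σ i.castSucc ≠ σ i.succ := by
  intro e
  apply h
  unfold PP
  apply Finset.prod_eq_zero (Finset.mem_univ i)
  rw [e]; exact z2 _

lemma chain_insert (J : Finset ι) {n : ℕ} (p : Fin (n+1)) (x : Vx blk m) (τ : Fin n → Vx blk m) :
    Chain J (p.insertNth x τ : Fin (n+1) → Vx blk m) ↔ Chain J τ ∧ Supp J x ∧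
      (∀ j : Fin n, j.castSucc < p → vle x (τ j)) ∧ (∀ j : Fin n, p ≤ j.castSucc → vle (τ j) x) := by
  unfold Chain
  rw [Fin.forall_iff_succAbove p]
  rw [Fin.forall_iff_succAbove (P := fun i => ∀ j, i < j → _) p]
  simp only [Fin.forall_iff_succAbove (p := p)]
  simp only [Fin.insertNth_apply_same, Fin.insertNth_apply_succAbove, lt_irrefl, false_imp_iff,
    true_and, Fin.lt_succAbove_iff_le_castSucc, Fin.succAbove_lt_iff_castSucc_lt, Fin.succAbove_lt_succAbove_iff]
  constructor
  · rintro ⟨⟨a, b⟩, c, d⟩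
    exact ⟨⟨b, fun i => (d i).2⟩, a, fun j => (d j).1, c⟩
  · rintro ⟨⟨b, d⟩, a, e, c⟩
    exact ⟨⟨a, b⟩, c, fun i => ⟨e i, d i⟩⟩

lemma reroot (χ : ι → GG) (κ : Vx blk m → GG) (hκ : ∀ g v, κ (act χ g v) = g + κ v)
    {n : ℕ} (u : (Fin n → Vx blk m) → ZMod 2) (hu : ∀ g σ, u (fun i => act χ g (σ i)) = u σ)
    (i j : Fin n) :
    ∑ σ, ind (κ (σ i) = 0) * u σ = ∑ σ, ind (κ (σ j) = 0) * u σ := by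
  classical
  have E : ∀ (i j : Fin n), ∑ σ, ind (κ (σ i) = 0) * u σ =
      ∑ g : GG, ∑ σ, ind (κ (σ i) = 0 ∧ κ (σ j) = g) * u σ := by
    intro i j
    rw [Finset.sum_comm]
    apply Finset.sum_congr rfl
    intro σ _
    by_cases h : κ (σ i) = 0 <;> simp [h, ind]
  rw [E i j, E j i]
  apply Finset.sum_congr rfl
  intro g _
  have hb : Function.Bijective (fun (σ : Fin n → Vx blk m) i => act χ g (σ i)) :=
    Function.Involutive.bijective (by intro σ; funext i; exact act_act χ g _)
  symm
  apply Fintype.sum_bijective _ hb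
  intro σ
  have hg : ∀ a : GG, g + a = 0 ↔ a = g := by
    intro a
    have h2 : g + g = 0 := by funext i; exact z2 _
    rw [← h2]; simp
  simp only [hu, hκ, hg]
  simp only [add_eq_left]
  rw [and_comm]

end BU
open Matrix
set_option linter.unusedSectionVars false
set_option linter.unusedSimpArgs false
namespace BU
open Finset
variable {ι : Type} [Fintype ι] [DecidableEq ι]
variable {blk : ι → Fin 3} {m : ℕ}

lemma vb (v : Vx blk m) (k : ι) : -(m:ℤ) ≤ v.1 k ∧ v.1 k ≤ m := abs_le.1 (v.2.1 k)
lemma vm (v : Vx blk m) (b : Fin 3) : ∃ k, blk k = b ∧ (v.1 k = m ∨ v.1 k = -m) := by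
  obtain ⟨k, h, h'⟩ := v.2.2 b
  exact ⟨k, h, (abs_eq (by positivity)).1 h'⟩
lemma mkV (v : ι → ℤ) (h1 : ∀ k, -(m:ℤ) ≤ v k ∧ v k ≤ m)
    (h2 : ∀ b, ∃ k, blk k = b ∧ (v k = m ∨ v k = -m)) : ∃ w : Vx blk m, w.1 = v :=
  ⟨⟨v, fun k => abs_le.2 (h1 k), fun b => by
    obtain ⟨k, h, h'⟩ := h2 b
    exact ⟨k, h, (abs_eq (by positivity)).2 h'⟩⟩, rfl⟩

lemma even_inv (p : Vx blk m → Prop) (f : (ι → ℤ) → (ι → ℤ))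
    (h : ∀ x, p x → ∃ y, p y ∧ y.1 = f x.1 ∧ y ≠ x ∧ f y.1 = x.1) :
    ∑ x, ind (p x) = 0 := by
  choose! g hg using h
  classical
  unfold ind
  rw [← Finset.sum_filter]
  apply Finset.sum_involution (fun a _ => g a)
  · intro a ha; exact z2 1
  · intro a ha _; exact (hg a (by simpa using ha)).2.2.1
  · intro a ha; simpa using (hg a (by simpa using ha)).1
  · intro a ha
    have h1 := hg a (by simpa using ha)
    have h2 := hg _ h1.1
    exact Subtype.ext (h2.2.1.trans h1.2.2.2)

lemma odd_inv (p : Vx blk m → Prop) (x0 : Vx blk m) (h0 : p x0) (f : (ι → ℤ) → (ι → ℤ))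
    (h : ∀ x, p x → x ≠ x0 → ∃ y, p y ∧ y ≠ x0 ∧ y.1 = f x.1 ∧ y ≠ x ∧ f y.1 = x.1) :
    ∑ x, ind (p x) = 1 := by
  have := even_inv (fun x => p x ∧ x ≠ x0) f (by
    rintro x ⟨hx, hx0⟩
    obtain ⟨y, a, b, c⟩ := h x hx hx0
    exact ⟨y, ⟨a, b⟩, c⟩)
  have e : ∀ x, ind (p x) = ind (p x ∧ x ≠ x0) + ind (x = x0) := by
    intro x
    by_cases hx : x = x0
    · subst hx; simp [h0, ind]
    · rw [ind_neg hx, add_zero]; exact ind_congr (by simp [hx])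
  rw [Finset.sum_congr rfl (fun x _ => e x), Finset.sum_add_distrib, this, zero_add]
  rw [Finset.sum_eq_single x0 (fun x _ hx => ind_neg hx) (by simp)]
  exact ind_pos rfl

lemma vle_refl (x : Vx blk m) : vle x x := fun _ => Or.inl rfl

lemma chain_le {J : Finset ι} {n : ℕ} {σ : Fin n → Vx blk m} (h : Chain J σ) {i j : Fin n} (hij : i ≤ j) :
    vle (σ j) (σ i) := by
  rcases hij.lt_or_eq with h1 | h1
  · exact h.2 _ _ h1
  · subst h1; exact vle_refl _

lemma even_mid {J : Finset ι} {r : ℕ} {τ : Fin (r+1) → Vx blk m} (hτ : Chain J τ)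
    (i : Fin r) (hi : τ i.castSucc ≠ τ i.succ) :
    ∑ x, ind (Chain J ((i.succ.castSucc).insertNth x τ : Fin (r+2) → Vx blk m)) = 0 := by
  simp only [chain_insert, hτ, true_and, Fin.castSucc_lt_castSucc_iff, Fin.castSucc_le_castSucc_iff]
  apply even_inv _ (fun x k => (τ i.castSucc).1 k + (τ i.succ).1 k - x k)
  rintro x ⟨hs, hu, hl⟩
  have c1 : vle (τ i.succ) (τ i.castSucc) := hτ.2 _ _ (Fin.castSucc_lt_succ)
  have c2 := hu i.castSucc (Fin.castSucc_lt_succ)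
  have c3 := hl i.succ le_rfl
  have key : ∀ k, (x.1 k = (τ i.castSucc).1 k ∨ x.1 k = (τ i.succ).1 k) := by
    intro k
    have := c1 k; have := c2 k; have := c3 k
    simp only [cle] at *
    omega
  obtain ⟨y, hy⟩ := mkV (blk := blk) (m := m) (fun k => (τ i.castSucc).1 k + (τ i.succ).1 k - x.1 k) (by
      intro k
      have := key k; have := vb (τ i.castSucc) k; have := vb (τ i.succ) k
      omega) (by
      intro b
      obtain ⟨k, hk, hk'⟩ := vm (τ i.succ) b
      refine ⟨k, hk, ?_⟩
      have := vb (τ i.castSucc) k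
      have := c1 k; have := key k
      simp only [cle] at *
      omega)
  have key2 : ∀ k, (y.1 k = (τ i.castSucc).1 k ∨ y.1 k = (τ i.succ).1 k) := by
    intro k
    rw [hy]; have := key k; dsimp only; omega
  refine ⟨y, ⟨?_, ?_, ?_⟩, hy, ?_, ?_⟩
  · intro k hk
    rw [hy]; dsimp only
    rw [hs k hk, hτ.1 _ k hk, hτ.1 _ k hk]; rfl
  · intro j hj k
    have h1 := chain_le hτ (i := j) (j := i.castSucc) (by rw [Fin.le_def]; rw [Fin.lt_def] at hj; simp at *; omega) k
    have h2 := chain_le hτ (i := j) (j := i.succ) hj.le k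
    rcases key2 k with h | h <;> rw [h] <;> assumption
  · intro j hj k
    have h1 := chain_le hτ (i := i.castSucc) (j := j) (le_trans (Fin.castSucc_lt_succ).le hj) k
    have h2 := chain_le hτ (i := i.succ) (j := j) hj k
    rcases key2 k with h | h <;> rw [h] <;> assumption
  · intro e
    apply hi
    apply Subtype.ext; funext k
    have h1 := congrFun hy k
    rw [e] at h1
    have := c1 k
    simp only [cle] at *
    omega
  · rw [hy]; funext k; dsimp only; ring

lemma exists_sgn (a : ℤ) : ∃ e : ℤ, (0 < a ∧ e = 1) ∨ (a < 0 ∧ e = -1) ∨ (a = 0 ∧ e = 0) := by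
  rcases lt_trichotomy a 0 with h | h | h
  · exact ⟨-1, by omega⟩
  · exact ⟨0, by omega⟩
  · exact ⟨1, by omega⟩

lemma even_ends (hm : 0 < m) {J : Finset ι} {r : ℕ} {τ : Fin (r+1) → Vx blk m} (hτ : Chain J τ) :
    ∑ x, ind (Supp J x ∧ ∀ j, vle (τ j) x) +
    ∑ x, ind (Supp J x ∧ ∀ j, vle x (τ j)) = 0 := by
  have hlo : ∀ j, vle (τ (Fin.last r)) (τ j) := fun j => chain_le hτ (Fin.le_last j)
  have hhi : ∀ j, vle (τ j) (τ 0) := fun j => chain_le hτ (Fin.zero_le j)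
  have hls := hτ.1 (Fin.last r)
  have hhs := hτ.1 0
  have hlh := hlo 0
  have A1 : ∀ x, (Supp J x ∧ ∀ j, vle (τ j) x) ↔ (Supp J x ∧ vle (τ (Fin.last r)) x ∧ vle (τ 0) x) := by
    intro x
    refine ⟨fun h => ⟨h.1, h.2 _, h.2 _⟩, fun h => ⟨h.1, fun j k => ?_⟩⟩
    have h1 := h.2.1 k; have h2 := h.2.2 k; have h3 := hlo j k; have h4 := hhi j k; have h5 := hlh k
    simp only [cle] at *
    omega
  have A2 : ∀ x, (Supp J x ∧ ∀ j, vle x (τ j)) ↔ (Supp J x ∧ vle x (τ (Fin.last r)) ∧ vle x (τ 0)) := by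
    intro x
    refine ⟨fun h => ⟨h.1, h.2 _, h.2 _⟩, fun h => ⟨h.1, fun j k => ?_⟩⟩
    have h1 := h.2.1 k; have h2 := h.2.2 k; have h3 := hlo j k; have h4 := hhi j k; have h5 := hlh k
    simp only [cle] at *
    omega
  simp only [A1, A2]
  generalize τ (Fin.last r) = lo at *
  generalize τ 0 = hi at *
  clear A1 A2 hlo hhi hτ τ
  by_cases hq : ∃ q ∈ J, lo.1 q = hi.1 q ∧ lo.1 q ≠ 0 ∧ -(m:ℤ) < lo.1 q ∧ lo.1 q < m
  · obtain ⟨q, hqJ, hq1, hq2, hq3, hq4⟩ := hq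
    obtain ⟨e, he⟩ := exists_sgn (lo.1 q)
    rw [even_inv _ (fun x => Function.update x q (2 * lo.1 q + e - x q)),
      even_inv _ (fun x => Function.update x q (2 * lo.1 q - e - x q)), add_zero]
    · rintro x ⟨hs, h1, h2⟩
      have hxq := h1 q
      obtain ⟨y, hy⟩ := mkV (blk := blk) (m := m) (Function.update x.1 q (2 * lo.1 q - e - x.1 q)) (by
        intro k
        by_cases hk : k = q
        · subst hk; simp only [Function.update_self, cle] at *; omega
        · simp only [Function.update_of_ne hk]; exact vb x k) (by
        intro b
        obtain ⟨k, hk, hk'⟩ := vm x b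
        refine ⟨k, hk, ?_⟩
        have hne : k ≠ q := by
          rintro rfl; simp only [cle] at *; omega
        simpa only [Function.update_of_ne hne] using hk')
      have yk : ∀ k, k ≠ q → y.1 k = x.1 k := fun k hk => by rw [hy, Function.update_of_ne hk]
      have yq : y.1 q = (2 * lo.1 q - e - x.1 q) := by rw [hy, Function.update_self]
      refine ⟨y, ⟨?_, ?_, ?_⟩, hy, ?_, ?_⟩
      · intro k hk
        rw [yk k (by rintro rfl; exact hk hqJ)]; exact hs k hk
      · intro k
        by_cases hk : k = q
        · subst hk; rw [yq]; simp only [cle] at *; omega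
        · rw [yk k hk]; exact h1 k
      · intro k
        by_cases hk : k = q
        · subst hk; rw [yq]; simp only [cle] at *; omega
        · rw [yk k hk]; exact h2 k
      · intro h; rw [h] at yq; omega
      · funext k
        by_cases hk : k = q
        · subst hk; simp only [Function.update_self]; omega
        · simp only [Function.update_of_ne hk]; exact yk k hk
    · rintro x ⟨hs, h1, h2⟩
      have hxq := h1 q
      obtain ⟨y, hy⟩ := mkV (blk := blk) (m := m) (Function.update x.1 q (2 * lo.1 q + e - x.1 q)) (by
        intro k
        by_cases hk : k = q
        · subst hk; simp only [Function.update_self, cle] at *; omega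
        · simp only [Function.update_of_ne hk]; exact vb x k) (by
        intro b
        obtain ⟨k, hk, hk'⟩ := vm lo b
        refine ⟨k, hk, ?_⟩
        have hne : k ≠ q := by
          rintro rfl; simp only [cle] at *; omega
        have := h1 k; have := vb x k
        simp only [Function.update_of_ne hne, cle] at *; omega)
      have yk : ∀ k, k ≠ q → y.1 k = x.1 k := fun k hk => by rw [hy, Function.update_of_ne hk]
      have yq : y.1 q = (2 * lo.1 q + e - x.1 q) := by rw [hy, Function.update_self]
      refine ⟨y, ⟨?_, ?_, ?_⟩, hy, ?_, ?_⟩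
      · intro k hk
        rw [yk k (by rintro rfl; exact hk hqJ)]; exact hs k hk
      · intro k
        by_cases hk : k = q
        · subst hk; rw [yq]; simp only [cle] at *; omega
        · rw [yk k hk]; exact h1 k
      · intro k
        by_cases hk : k = q
        · subst hk; rw [yq]; simp only [cle] at *; omega
        · rw [yk k hk]; exact h2 k
      · intro h; rw [h] at yq; omega
      · funext k
        by_cases hk : k = q
        · subst hk; simp only [Function.update_self]; omega
        · simp only [Function.update_of_ne hk]; exact yk k hk
  · have hq' : ∀ k, lo.1 k = hi.1 k → lo.1 k = 0 ∨ lo.1 k = m ∨ lo.1 k = -m := by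
      intro k hk
      by_cases hkJ : k ∈ J
      · by_contra hcon
        apply hq
        have := vb lo k
        exact ⟨k, hkJ, hk, by omega, by omega, by omega⟩
      · left; exact hls k hkJ
    have TOP : ∑ x, ind (Supp J x ∧ vle lo x ∧ vle hi x) = 1 := by
      apply odd_inv _ hi ⟨hhs, hlh, vle_refl _⟩ (fun x k => 2 * hi.1 k - x k)
      rintro x ⟨hs, h1, h2⟩ hne
      have key : ∀ k, x.1 k = hi.1 k ∨ (lo.1 k = 0 ∧ hi.1 k = 0 ∧ (x.1 k = 1 ∨ x.1 k = -1)) := by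
        intro k
        have := h1 k; have := h2 k; have := hlh k; have := hq' k; have := vb x k; have := vb lo k
        simp only [cle] at *; omega
      obtain ⟨y, hy⟩ := mkV (blk := blk) (m := m) (fun k => 2 * hi.1 k - x.1 k) (by
        intro k
        have := key k; have := vb x k
        omega) (by
        intro b
        obtain ⟨k, hk, hk'⟩ := vm hi b
        refine ⟨k, hk, ?_⟩
        have := key k
        omega)
      have yk : ∀ k, y.1 k = 2 * hi.1 k - x.1 k := fun k => by rw [hy]
      refine ⟨y, ⟨?_, ?_, ?_⟩, ?_, hy, ?_, ?_⟩
      · intro k hk; rw [yk, hs k hk, hhs k hk]; rfl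
      · intro k; have := key k; have := h1 k; rw [yk]; simp only [cle] at *; omega
      · intro k; have := key k; have := h2 k; rw [yk]; simp only [cle] at *; omega
      · intro h; apply hne; apply Subtype.ext; funext k; have := yk k; rw [h] at this; omega
      · intro h; apply hne; apply Subtype.ext; funext k; have := yk k; rw [h] at this; omega
      · rw [hy]; funext k; dsimp only; omega
    have BOT : ∑ x, ind (Supp J x ∧ vle x lo ∧ vle x hi) = 1 := by
      choose p hp hp' using vm lo
      choose e he using fun k => exists_sgn (lo.1 k)
      obtain ⟨x0, hx0⟩ := mkV (blk := blk) (m := m) (fun k => if lo.1 k ≠ hi.1 k ∨ k = p (blk k) then lo.1 k else lo.1 k - e k) (by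
        intro k
        have := vb lo k; have := he k
        split_ifs <;> omega) (by
        intro b
        refine ⟨p b, hp b, ?_⟩
        have := hp' b
        simp only [hp, or_true, if_true]; exact this)
      have x0k : ∀ k, (k = p (blk k) → x0.1 k = lo.1 k) ∧ (lo.1 k ≠ hi.1 k → x0.1 k = lo.1 k) ∧
          (lo.1 k = hi.1 k → k ≠ p (blk k) → x0.1 k = lo.1 k - e k) := by
        intro k
        rw [hx0]; dsimp only
        refine ⟨fun h => if_pos (Or.inr h), fun h => if_pos (Or.inl h), fun h h' => if_neg (by tauto)⟩
      let D : (ι → ℤ) → Fin 3 → Prop := fun x b => ∃ k, blk k = b ∧ k ≠ p b ∧ x k ≠ x0.1 k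
      let F : (ι → ℤ) → Fin 3 := fun x => Classical.epsilon (D x)
      apply odd_inv _ x0 ?_ (fun x => Function.update x (p (F x)) (2 * lo.1 (p (F x)) - e (p (F x)) - x (p (F x))))
      · rintro x ⟨hs, h1, h2⟩ hne
        have key : ∀ k, x.1 k = lo.1 k ∨ (lo.1 k = hi.1 k ∧ lo.1 k ≠ 0 ∧ x.1 k = lo.1 k - e k) := by
          intro k
          have := h1 k; have := h2 k; have := hlh k; have := hq' k; have := he k
          simp only [cle] at *; omega
        have hD : ∃ b, D x.1 b := by
          obtain ⟨k, hk⟩ : ∃ k, x.1 k ≠ x0.1 k := by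
            by_contra hcon; push Not at hcon
            exact hne (Subtype.ext (funext hcon))
          by_cases hkp : k = p (blk k)
          · obtain ⟨l, hl, hl'⟩ := vm x (blk k)
            have hlk : l ≠ k := by
              rintro rfl
              have := (x0k l).1 hkp
              have := key l; have := he l; have := vb lo l
              omega
            refine ⟨blk k, l, hl, ?_, ?_⟩
            · rw [← hkp]; exact hlk
            · have a1 := (x0k l).2.2
              have a2 := key l; have a3 := he l; have := vb lo l
              have a4 : l ≠ p (blk l) := by rw [hl, ← hkp]; exact hlk
              have a5 : lo.1 l = hi.1 l := by
                have := vb hi l; have := hlh l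
                simp only [cle] at *; omega
              have := a1 a5 a4
              omega
          · exact ⟨blk k, k, rfl, hkp, hk⟩
        have hF : D x.1 (F x.1) := Classical.epsilon_spec hD
        have hpF := hp' (F x.1)
        have hpb := hp (F x.1)
        have hFe : ∀ b z, F (Function.update x.1 (p b) z) = F x.1 := by
          intro b z
          have : D (Function.update x.1 (p b) z) = D x.1 := by
            funext c
            apply propext
            apply exists_congr
            intro k
            apply and_congr_right; intro hk
            apply and_congr_right; intro hk2
            rw [Function.update_of_ne]
            rintro rfl
            rw [hp] at hk; subst hk; exact hk2 rfl
          simp only [F, this]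
        have hFe' := hFe (F x.1) (2 * lo.1 (p (F x.1)) - e (p (F x.1)) - x.1 (p (F x.1)))
        generalize F x.1 = b at *
        have heq := he (p b)
        have hkq := key (p b)
        have hlq : lo.1 (p b) = hi.1 (p b) := by
          have := vb hi (p b); have := hlh (p b)
          simp only [cle] at *; omega
        generalize hqq : p b = q at *
        obtain ⟨y, hy⟩ := mkV (blk := blk) (m := m) (Function.update x.1 q (2 * lo.1 q - e q - x.1 q)) (by
          intro k
          by_cases hk : k = q
          · subst hk; simp only [Function.update_self] at *; omega
          · simp only [Function.update_of_ne hk]; exact vb x k) (by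
          intro c
          by_cases hc : c = b
          · subst hc
            obtain ⟨k, hk, hk2, hk3⟩ := hF
            rw [hqq] at hk2
            refine ⟨k, hk, ?_⟩
            rw [Function.update_of_ne hk2]
            have a4 : k ≠ p (blk k) := by rw [hk, hqq]; exact hk2
            have := (x0k k).2
            have := key k
            have := hq' k
            have a9 : lo.1 k = hi.1 k := by
              by_contra hcon
              have := (x0k k).2.1 hcon
              omega
            have := (x0k k).2.2 a9 a4
            have := he k
            omega
          · obtain ⟨k, hk, hk'⟩ := vm x c
            refine ⟨k, hk, ?_⟩
            rw [Function.update_of_ne]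
            · exact hk'
            · rintro rfl; exact hc (hk.symm.trans hpb))
        have yk : ∀ k, k ≠ q → y.1 k = x.1 k := fun k hk => by rw [hy, Function.update_of_ne hk]
        have yq : y.1 q = (2 * lo.1 q - e q - x.1 q) := by rw [hy, Function.update_self]
        refine ⟨y, ⟨?_, ?_, ?_⟩, ?_, hy, ?_, ?_⟩
        · intro k hk
          have : k ≠ q := by
            rintro rfl
            have := hls k hk; omega
          rw [yk k this]; exact hs k hk
        · intro k
          by_cases hk : k = q
          · subst hk; rw [yq]; simp only [cle] at *; omega
          · rw [yk k hk]; exact h1 k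
        · intro k
          by_cases hk : k = q
          · subst hk; rw [yq]; simp only [cle] at *; omega
          · rw [yk k hk]; exact h2 k
        · intro h
          obtain ⟨k, hk, hk2, hk3⟩ := hF
          rw [hqq] at hk2
          apply hk3
          rw [← yk k hk2, h]
        · intro h; rw [h] at yq; omega
        · have hy' := hy
          rw [← hy'] at hFe'
          simp only [hFe', hqq]
          funext k
          by_cases hk : k = q
          · subst hk; simp only [Function.update_self]; omega
          · simp only [Function.update_of_ne hk]; exact yk k hk
      · refine ⟨?_, ?_, ?_⟩
        · intro k hk
          have := x0k k; have := he k; have := hls k hk; have := hhs k hk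
          by_cases h : k = p (blk k)
          · rw [(x0k k).1 h]; exact hls k hk
          · rw [(x0k k).2.2 (by omega) h]; omega
        · intro k
          have a := x0k k; have := he k; have := hlh k
          by_cases h : k = p (blk k)
          · rw [a.1 h]; exact Or.inl rfl
          · by_cases h' : lo.1 k = hi.1 k
            · rw [a.2.2 h' h]; simp only [cle] at *; omega
            · rw [a.2.1 h']; exact Or.inl rfl
        · intro k
          have a := x0k k; have := he k; have := hlh k
          by_cases h : k = p (blk k)
          · rw [a.1 h]; exact this
          · by_cases h' : lo.1 k = hi.1 k
            · rw [a.2.2 h' h]; simp only [cle] at *; omega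
            · rw [a.2.1 h']; exact this
    rw [TOP, BOT]; exact z2 1

lemma evenE (hm : 0 < m) {J : Finset ι} {r : ℕ} (τ : Fin (r+1) → Vx blk m)
    (hnd : ∀ i : Fin r, τ i.castSucc ≠ τ i.succ) :
    ∑ p : Fin (r+2), ∑ x, ind (Chain J (p.insertNth x τ : Fin (r+2) → Vx blk m)) = 0 := by
  by_cases hτ : Chain J τ
  · rw [Fin.sum_univ_castSucc, Fin.sum_univ_succ]
    have h1 : ∀ i : Fin r, ∑ x, ind (Chain J ((i.succ.castSucc).insertNth x τ : Fin (r+2) → Vx blk m)) = 0 :=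
      fun i => even_mid hτ i (hnd i)
    rw [Finset.sum_eq_zero (fun i _ => h1 i), add_zero]
    refine Eq.trans ?_ (even_ends hm hτ)
    congr 1
    · apply Finset.sum_congr rfl; intro x _
      simp only [chain_insert, hτ, true_and]
      apply ind_congr
      simp
    · apply Finset.sum_congr rfl; intro x _
      simp only [chain_insert, hτ, true_and]
      apply ind_congr
      apply and_congr_right; intro _
      constructor
      · intro h j; exact h.1 j (Fin.castSucc_lt_last j)
      · intro h; exact ⟨fun j _ => h j, fun j hj => absurd hj (not_le.2 (Fin.castSucc_lt_last j))⟩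
  · simp only [chain_insert, hτ, false_and, ind_neg not_false, Finset.sum_const_zero]

end BU
open Matrix
set_option linter.unusedSectionVars false
set_option linter.unusedSimpArgs false
namespace BU
open Finset
variable {ι : Type} [Fintype ι] [DecidableEq ι]
variable {blk : ι → Fin 3} {m : ℕ}

lemma sum_insertNth {α : Type} [Fintype α] {n : ℕ} (p : Fin (n+1)) (f : (Fin (n+1) → α) → ZMod 2) :
    ∑ σ, f σ = ∑ τ : Fin n → α, ∑ x : α, f (p.insertNth x τ) := by
  rw [← (Fin.insertNthEquiv (fun _ => α) p).sum_comp, Fintype.sum_prod_type, Finset.sum_comm]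
  rfl

lemma sum_cons {α : Type} [Fintype α] {n : ℕ} (f : (Fin (n+1) → α) → ZMod 2) :
    ∑ σ, f σ = ∑ τ : Fin n → α, ∑ x : α, f (Fin.cons x τ) := by
  rw [sum_insertNth 0]
  simp only [Fin.insertNth_zero']

lemma PP_act {χ : ι → GG} {r : ℕ} (s : Fin r → Vx blk m → ZMod 2) (hs : ∀ i, ∃ ψ, IsCh χ ψ (s i))
    (g : GG) (σ : Fin (r+1) → Vx blk m) : PP s (fun i => act χ g (σ i)) = PP s σ := by
  unfold PP
  apply Finset.prod_congr rfl
  intro i _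
  obtain ⟨ψ, h⟩ := hs i
  rw [h, h]
  linear_combination z2 (ψ ⬝ᵥ g)

lemma NN_inv {χ : ι → GG} (hm : 0 < m) {κ : Vx blk m → GG} (hκ : ∀ g v, κ (act χ g v) = g + κ v)
    (J : Finset ι) {r : ℕ} (h : Vx blk m → ZMod 2) (hh : IsCh χ 0 h)
    (s : Fin r → Vx blk m → ZMod 2) (hs : ∀ i, ∃ ψ, IsCh χ ψ (s i)) :
    NN κ J (Fin.cons h s : Fin (r+1) → Vx blk m → ZMod 2) = 0 := by
  unfold NN
  simp only [← cocycle2, Finset.mul_sum]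
  rw [Finset.sum_comm]
  have key : ∀ p : Fin (r+2), ∑ σ : Fin (r+2) → Vx blk m, ind (Chain J σ) * ind (κ (σ (Fin.last (r+1))) = 0) *
      (h ((p.removeNth σ) 0) * PP s (p.removeNth σ)) =
      ∑ τ : Fin (r+1) → Vx blk m, (ind (κ (τ (Fin.last r)) = 0) * h (τ 0) * PP s τ) *
        ∑ x, ind (Chain J (p.insertNth x τ : Fin (r+2) → Vx blk m)) := by
    intro p
    have := reroot χ κ hκ (fun σ : Fin (r+2) → Vx blk m => ind (Chain J σ) * (h ((p.removeNth σ) 0) * PP s (p.removeNth σ)))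
      (by
        intro g σ
        rw [chain_act]
        have e : p.removeNth (fun i => act χ g (σ i)) = fun i => act χ g (p.removeNth σ i) := rfl
        rw [e, PP_act s hs, hh]; simp) (Fin.last (r+1)) (p.succAbove (Fin.last r))
    have e1 : ∀ σ : Fin (r+2) → Vx blk m, ind (Chain J σ) * ind (κ (σ (Fin.last (r+1))) = 0) *
      (h ((p.removeNth σ) 0) * PP s (p.removeNth σ)) = ind (κ (σ (Fin.last (r+1))) = 0) * (ind (Chain J σ) * (h ((p.removeNth σ) 0) * PP s (p.removeNth σ))) := by
      intro σ; ring
    rw [Finset.sum_congr rfl (fun σ _ => e1 σ), this]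
    rw [sum_insertNth p]
    apply Finset.sum_congr rfl; intro τ _
    rw [Finset.mul_sum]
    apply Finset.sum_congr rfl; intro x _
    simp only [Fin.insertNth_apply_succAbove, Fin.removeNth_insertNth]
    ring
  rw [Finset.sum_congr rfl (fun p _ => key p), Finset.sum_comm]
  apply Finset.sum_eq_zero
  intro τ _
  rw [← Finset.mul_sum]
  by_cases hP : PP s τ = 0
  · rw [hP]; simp
  · rw [evenE hm τ (PP_deg s τ hP), mul_zero]

lemma NN_add (κ : Vx blk m → GG) (J : Finset ι) {r : ℕ} (h h' : Vx blk m → ZMod 2)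
    (s : Fin r → Vx blk m → ZMod 2) :
    NN κ J (Fin.cons (h + h') s : Fin (r+1) → Vx blk m → ZMod 2) =
    NN κ J (Fin.cons h s : Fin (r+1) → Vx blk m → ZMod 2) + NN κ J (Fin.cons h' s : Fin (r+1) → Vx blk m → ZMod 2) := by
  unfold NN
  rw [← Finset.sum_add_distrib]
  apply Finset.sum_congr rfl; intro σ _
  obtain ⟨y, ρ, rfl⟩ : ∃ y ρ, σ = Fin.cons y ρ := ⟨σ 0, Fin.tail σ, (Fin.cons_self_tail σ).symm⟩
  simp only [PP_cons, Pi.add_apply]; ring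

lemma NN_sum (κ : Vx blk m → GG) (J : Finset ι) {r : ℕ} (K : Finset ι) (h : ι → Vx blk m → ZMod 2)
    (s : Fin r → Vx blk m → ZMod 2) :
    NN κ J (Fin.cons (∑ k ∈ K, h k) s : Fin (r+1) → Vx blk m → ZMod 2) =
    ∑ k ∈ K, NN κ J (Fin.cons (h k) s : Fin (r+1) → Vx blk m → ZMod 2) := by
  induction K using Finset.induction_on with
  | empty =>
    simp only [Finset.sum_empty]
    unfold NN
    apply Finset.sum_eq_zero; intro σ _
    obtain ⟨y, ρ, rfl⟩ : ∃ y ρ, σ = Fin.cons y ρ := ⟨σ 0, Fin.tail σ, (Fin.cons_self_tail σ).symm⟩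
    simp [PP_cons]
  | insert a K ha ih =>
    rw [Finset.sum_insert ha, Finset.sum_insert ha, NN_add, ih]

/-- sign of a coordinate -/
noncomputable def sg (χ : ι → GG) (κ : Vx blk m → GG) (k : ι) (v : Vx blk m) : ZMod 2 :=
  if 0 < v.1 k then 0 else if v.1 k < 0 then 1 else χ k ⬝ᵥ κ v

lemma z2cases (a : ZMod 2) : a = 0 ∨ a = 1 := by
  revert a; decide

lemma sg_ch {χ : ι → GG} {κ : Vx blk m → GG} (hκ : ∀ g v, κ (act χ g v) = g + κ v) (k : ι) :
    IsCh χ (χ k) (sg χ κ k) := by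
  intro g v
  unfold sg
  rw [hκ, dotProduct_add]
  rcases z2cases (χ k ⬝ᵥ g) with h | h
  · simp [act, h]
  · simp only [act, h, one_ne_zero, if_false]
    rcases lt_trichotomy (v.1 k) 0 with h1 | h1 | h1
    · rw [if_pos (by omega), if_neg (by omega), if_pos h1]; rfl
    · rw [if_neg (by omega), if_neg (by omega), if_neg (by omega), if_neg (by omega)]
    · rw [if_neg (by omega), if_pos (by omega), if_pos h1]; rfl

lemma chain_cons (J : Finset ι) {n : ℕ} (x : Vx blk m) (τ : Fin n → Vx blk m) :
    Chain J (Fin.cons x τ : Fin (n+1) → Vx blk m) ↔ Chain J τ ∧ Supp J x ∧ ∀ j, vle (τ j) x := by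
  have := chain_insert J 0 x τ
  rw [Fin.insertNth_zero'] at this
  rw [this]; simp

lemma card_moved {J : Finset ι} : ∀ {r : ℕ} (τ : Fin (r+1) → Vx blk m) (_ : Chain J τ)
    (_ : ∀ i : Fin r, τ i.castSucc ≠ τ i.succ),
    r ≤ (univ.filter fun k => (τ 0).1 k ≠ (τ (Fin.last r)).1 k).card := by
  intro r
  induction r with
  | zero => intros; omega
  | succ r ih =>
    intro τ hτ hnd
    obtain ⟨y, ρ, rfl⟩ : ∃ y ρ, τ = Fin.cons y ρ := ⟨τ 0, Fin.tail τ, (Fin.cons_self_tail τ).symm⟩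
    have h1 := (chain_cons J y ρ).1 hτ
    have h2 := ih ρ h1.1 (fun i => by simpa using hnd i.succ)
    have h3 := hnd 0
    simp only [Fin.castSucc_zero, Fin.cons_zero, Fin.cons_succ] at h3
    have hl : (Fin.cons y ρ : Fin (r+1+1) → Vx blk m) (Fin.last (r+1)) = ρ (Fin.last r) := by
      rw [← Fin.succ_last, Fin.cons_succ]
    rw [hl, Fin.cons_zero]
    refine lt_of_le_of_lt h2 (Finset.card_lt_card ?_)
    obtain ⟨k, hk⟩ : ∃ k, y.1 k ≠ (ρ 0).1 k := by
      by_contra hcon; push Not at hcon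
      exact h3 (Subtype.ext (funext hcon))
    have hlo : vle (ρ (Fin.last r)) (ρ 0) := chain_le h1.1 (Fin.zero_le _)
    rw [Finset.ssubset_iff_of_subset]
    · refine ⟨k, ?_, ?_⟩
      all_goals
        have a := h1.2.2 0 k; have b := h1.2.2 (Fin.last r) k; have c := hlo k
        simp only [Finset.mem_filter, Finset.mem_univ, true_and, cle] at *
        omega
    · intro l hl
      have a := h1.2.2 0 l; have b := h1.2.2 (Fin.last r) l; have c := hlo l
      simp only [Finset.mem_filter, Finset.mem_univ, true_and, cle] at *
      omega

lemma NN_sg {χ : ι → GG} (hm : 0 < m) (κ : Vx blk m → GG)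
    (J : Finset ι) {r : ℕ} (hJ : J.card = r + 1 + 3) (k : ι) (hk : k ∈ J)
    (s : Fin r → Vx blk m → ZMod 2) :
    NN κ J (Fin.cons (sg χ κ k) s : Fin (r+1) → Vx blk m → ZMod 2) = NN κ (J.erase k) s := by
  unfold NN
  rw [sum_cons]
  apply Finset.sum_congr rfl; intro τ _
  simp only [PP_cons, ← Fin.succ_last, Fin.cons_succ]
  have goal : PP s τ ≠ 0 → ∑ y, ind (Chain J (Fin.cons y τ : Fin (r+2) → Vx blk m)) * (sg χ κ k y + sg χ κ k (τ 0)) =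
      ind (Chain (J.erase k) τ) := by
    intro hP
    have hnd := PP_deg s τ hP
    by_cases hc : Chain J τ
    swap
    · rw [ind_neg]
      · apply Finset.sum_eq_zero; intro y _
        rw [ind_neg (by rw [chain_cons]; tauto), zero_mul]
      · intro h; apply hc
        exact ⟨fun i l hl => h.1 i l (fun hl' => hl (Finset.mem_of_mem_erase hl')), h.2⟩
    by_cases h0 : (τ 0).1 k = 0
    · rw [ind_pos]
      swap
      · refine ⟨fun i l hl => ?_, hc.2⟩
        by_cases hlk : l = k
        · subst hlk
          have := chain_le hc (Fin.zero_le i) l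
          simp only [cle] at this; omega
        · exact hc.1 i l (fun h => hl (Finset.mem_erase.2 ⟨hlk, h⟩))
      have hD := card_moved τ hc hnd
      set D := univ.filter fun k => (τ 0).1 k ≠ (τ (Fin.last r)).1 k with hDdef
      choose p hp hp' using vm (τ (Fin.last r))
      have hlh : vle (τ (Fin.last r)) (τ 0) := chain_le hc (Fin.zero_le _)
      have hpinj : Function.Injective p := fun a b h => by rw [← hp a, ← hp b, h]
      have hdisj : Disjoint D (univ.image p) := by
        rw [Finset.disjoint_left]
        intro l hl hl'
        simp only [Finset.mem_image, Finset.mem_univ, true_and] at hl'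
        obtain ⟨b, rfl⟩ := hl'
        have a1 := hp' b; have a2 := vb (τ 0) (p b); have a3 := hlh (p b)
        simp only [hDdef, Finset.mem_filter, Finset.mem_univ, true_and, cle] at *
        omega
      have hsub : D ∪ univ.image p ⊆ J.erase k := by
        intro l hl
        rw [Finset.mem_union] at hl
        have c := hlh l
        have : (τ 0).1 l ≠ 0 := by
          rcases hl with hl | hl
          · simp only [hDdef, Finset.mem_filter, Finset.mem_univ, true_and, cle] at *
            omega
          · simp only [Finset.mem_image, Finset.mem_univ, true_and] at hl
            obtain ⟨b, rfl⟩ := hl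
            have a1 := hp' b
            simp only [cle] at c; omega
        rw [Finset.mem_erase]
        refine ⟨by rintro rfl; exact this h0, ?_⟩
        by_contra hcon
        exact this (hc.1 0 l hcon)
      have heq : D ∪ univ.image p = J.erase k := by
        apply Finset.eq_of_subset_of_card_le hsub
        rw [Finset.card_union_of_disjoint hdisj, Finset.card_erase_of_mem hk, Finset.card_image_of_injective _ hpinj]
        simp only [Finset.card_univ, Fintype.card_fin]
        omega
      have hup : ∀ y : Vx blk m, Supp J y → (∀ j, vle (τ j) y) → ∀ l, l ≠ k → y.1 l = (τ 0).1 l := by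
        intro y hs hy l hl
        by_cases hlJ : l ∈ J
        · have : l ∈ D ∪ univ.image p := by rw [heq]; exact Finset.mem_erase.2 ⟨hl, hlJ⟩
          rw [Finset.mem_union] at this
          have a1 := hy 0 l; have a2 := hy (Fin.last r) l; have a3 := hlh l; have a4 := vb y l
          rcases this with h | h
          · simp only [hDdef, Finset.mem_filter, Finset.mem_univ, true_and, cle] at *
            omega
          · simp only [Finset.mem_image, Finset.mem_univ, true_and] at h
            obtain ⟨b, rfl⟩ := h
            have a5 := hp' b
            have a6 := vb (τ 0) (p b)
            simp only [cle] at *; omega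
        · rw [hs l hlJ, hc.1 0 l hlJ]
      have hmk : ∀ e : ℤ, (e = 1 ∨ e = -1) → ∃ y : Vx blk m, y.1 = Function.update (τ 0).1 k e := by
        intro e he
        apply mkV
        · intro l
          by_cases hl : l = k
          · subst hl; rw [Function.update_self]; omega
          · rw [Function.update_of_ne hl]; exact vb _ l
        · intro b
          obtain ⟨l, hl, hl'⟩ := vm (τ 0) b
          refine ⟨l, hl, ?_⟩
          rw [Function.update_of_ne]
          · exact hl'
          · rintro rfl; omega
      obtain ⟨y1, hy1⟩ := hmk 1 (Or.inl rfl)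
      obtain ⟨y2, hy2⟩ := hmk (-1) (Or.inr rfl)
      have hk1 : y1.1 k = 1 := by rw [hy1, Function.update_self]
      have hk2 : y2.1 k = -1 := by rw [hy2, Function.update_self]
      have hch : ∀ (y : Vx blk m) (e : ℤ), (e = 1 ∨ e = -1) → y.1 = Function.update (τ 0).1 k e →
          Chain J (Fin.cons y τ : Fin (r+2) → Vx blk m) := by
        intro y e he hy
        rw [chain_cons]
        refine ⟨hc, ?_, ?_⟩
        · intro l hl
          rw [hy, Function.update_of_ne (by rintro rfl; exact hl hk)]
          exact hc.1 0 l hl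
        · intro j l
          have h1 := chain_le hc (Fin.zero_le j) l
          rw [hy]
          by_cases hl : l = k
          · subst hl; rw [Function.update_self]; simp only [cle] at *; omega
          · rw [Function.update_of_ne hl]; exact h1
      have hne : y1 ≠ y2 := by intro h; rw [h, hk2] at hk1; omega
      rw [Finset.sum_eq_add y1 y2 hne]
      · rw [ind_pos (hch y1 1 (Or.inl rfl) hy1), ind_pos (hch y2 (-1) (Or.inr rfl) hy2)]
        have e1 : sg χ κ k y1 = 0 := by simp [sg, hk1]
        have e2 : sg χ κ k y2 = 1 := by simp [sg, hk2]
        rw [e1, e2]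
        linear_combination z2 (sg χ κ k (τ 0))
      · rintro y _ ⟨hy1', hy2'⟩
        by_cases hy : Chain J (Fin.cons y τ : Fin (r+2) → Vx blk m)
        · have hy' := (chain_cons J y τ).1 hy
          have hu := hup y hy'.2.1 hy'.2.2
          have : y = τ 0 := by
            apply Subtype.ext; funext l
            by_cases hl : l = k
            · subst hl
              have := hy'.2.2 0 l
              by_contra hcon
              have h3 : y.1 l = 1 ∨ y.1 l = -1 := by simp only [cle] at this; omega
              rcases h3 with h3 | h3
              · apply hy1'; apply Subtype.ext; funext q
                rw [hy1]
                by_cases hq : q = l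
                · subst hq; rw [Function.update_self, h3]
                · rw [Function.update_of_ne hq]; exact hu q hq
              · apply hy2'; apply Subtype.ext; funext q
                rw [hy2]
                by_cases hq : q = l
                · subst hq; rw [Function.update_self, h3]
                · rw [Function.update_of_ne hq]; exact hu q hq
            · exact hu l hl
          rw [this, z2, mul_zero]
        · rw [ind_neg hy, zero_mul]
      · simp
      · simp
    · rw [ind_neg (fun h => h0 (h.1 0 k (by simp)))]
      apply Finset.sum_eq_zero; intro y _
      by_cases hy : Chain J (Fin.cons y τ : Fin (r+2) → Vx blk m)
      · have hy' := ((chain_cons J y τ).1 hy).2.2 0 k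
        have : sg χ κ k y = sg χ κ k (τ 0) := by
          unfold sg
          rcases lt_or_gt_of_ne h0 with h1 | h1
          · rw [if_neg (by simp only [cle] at hy'; omega), if_pos (by simp only [cle] at hy'; omega), if_neg (by omega), if_pos h1]
          · rw [if_pos (by simp only [cle] at hy'; omega), if_pos h1]
        rw [this, z2, mul_zero]
      · rw [ind_neg hy, zero_mul]
  by_cases hP : PP s τ = 0
  · simp [hP]
  · rw [← goal hP, Finset.sum_mul, Finset.sum_mul]
    apply Finset.sum_congr rfl; intro y _; ring

lemma NN_R1 {χ : ι → GG} (hm : 0 < m) {κ : Vx blk m → GG} (hκ : ∀ g v, κ (act χ g v) = g + κ v)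
    (J : Finset ι) {r : ℕ} (hJ : J.card = r + 1 + 3) (K : Finset ι) (hK : K ⊆ J)
    (h : Vx blk m → ZMod 2) (hh : IsCh χ (∑ k ∈ K, χ k) h)
    (s : Fin r → Vx blk m → ZMod 2) (hs : ∀ i, ∃ ψ, IsCh χ ψ (s i)) :
    NN κ J (Fin.cons h s : Fin (r+1) → Vx blk m → ZMod 2) = ∑ k ∈ K, NN κ (J.erase k) s := by
  have h1 : IsCh χ 0 (h + ∑ k ∈ K, sg χ κ k) := by
    intro g v
    simp only [Pi.add_apply, Finset.sum_apply]
    rw [hh g v, Finset.sum_congr rfl (fun k _ => sg_ch hκ k g v), Finset.sum_add_distrib, sum_dotProduct, zero_dotProduct]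
    linear_combination z2 (∑ k ∈ K, χ k ⬝ᵥ g)
  have h2 := NN_inv hm hκ J _ h1 s hs
  rw [NN_add, NN_sum] at h2
  rw [eq_neg_of_add_eq_zero_left h2, CharTwo.neg_eq]
  apply Finset.sum_congr rfl; intro k hk
  exact NN_sg hm κ J hJ k (hK hk) s

lemma NN_miss (hm : 0 < m) (κ : Vx blk m → GG) (J : Finset ι) (b : Fin 3) (hb : ∀ k ∈ J, blk k ≠ b)
    {r : ℕ} (s : Fin r → Vx blk m → ZMod 2) : NN κ J s = 0 := by
  unfold NN
  apply Finset.sum_eq_zero; intro σ _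
  rw [ind_neg, zero_mul, zero_mul]
  intro h
  obtain ⟨k, hk, hk'⟩ := vm (σ 0) b
  have := h.1 0 k (fun hkJ => hb k hkJ hk)
  omega

def Hχ (blk : ι → Fin 3) (χ : ι → GG) : Prop :=
  ∀ p : Fin 3 → ι, (∀ b, blk (p b) = b) → Function.Bijective (fun (g : GG) (b : Fin 3) => χ (p b) ⬝ᵥ g)

lemma NN_base {χ : ι → GG} (hm : 0 < m) (hχ : Hχ blk χ) {κ : Vx blk m → GG} (hκ : ∀ g v, κ (act χ g v) = g + κ v)
    (p : Fin 3 → ι) (hp : ∀ b, blk (p b) = b) (J : Finset ι) (hJ : ∀ k, k ∈ J ↔ k = p (blk k))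
    (s : Fin 0 → Vx blk m → ZMod 2) : NN κ J s = 1 := by
  classical
  obtain ⟨v0, hv0⟩ := mkV (blk := blk) (m := m) (fun k => if k = p (blk k) then (m : ℤ) else 0) (by
    intro k; split_ifs <;> omega) (by
    intro b; exact ⟨p b, hp b, by simp [hp]⟩)
  have hs0 : ∀ w : Vx blk m, Supp J w ↔ ∃ g, w = act χ g v0 := by
    intro w
    constructor
    · intro hw
      have hw' : ∀ b, w.1 (p b) = m ∨ w.1 (p b) = -m := by
        intro b
        obtain ⟨k, hk, hk'⟩ := vm w b
        have : k ∈ J := by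
          by_contra hcon
          have := hw k hcon; omega
        rw [hJ, hk] at this
        rw [← this]; exact hk'
      obtain ⟨g, hg⟩ := (hχ p hp).2 (fun b => if w.1 (p b) = m then 0 else 1)
      refine ⟨g, ?_⟩
      apply Subtype.ext; funext k
      simp only [act]
      rw [hv0]; dsimp only
      by_cases hk : k = p (blk k)
      · have h1 := congrFun hg (blk k)
        dsimp only at h1
        rw [← hk] at h1
        have h2 := hw' (blk k)
        rw [← hk] at h2
        rw [h1, if_pos hk]
        by_cases h3 : w.1 k = m
        · simp [h3]
        · simp only [h3, if_false, one_ne_zero]; omega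
      · rw [if_neg hk, hw k (by rw [hJ]; exact hk)]; simp
    · rintro ⟨g, rfl⟩
      rw [supp_act]
      intro k hk
      rw [hv0]; dsimp only
      rw [if_neg (by rw [← hJ]; exact hk)]
  unfold NN
  have gg : ∀ a : GG, a + a = 0 := fun a => by funext i; exact z2 _
  rw [Finset.sum_eq_single (fun _ => act χ (κ v0) v0)]
  · rw [ind_pos, ind_pos]
    · simp [PP]
    · rw [hκ]; exact gg _
    · refine ⟨fun _ => (hs0 _).2 ⟨_, rfl⟩, fun i j hij => ?_⟩
      omega
  · intro σ _ hσ
    by_cases h1 : Chain J σ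
    · rw [ind_neg (p := κ _ = 0)]
      · simp
      · intro h2
        apply hσ
        funext i
        have : i = Fin.last 0 := by apply Fin.ext; simp
        rw [this]
        obtain ⟨g, hg⟩ := (hs0 _).1 (h1.1 (Fin.last 0))
        rw [hg, hκ] at h2
        have : g = κ v0 := by
          rw [← gg (κ v0)] at h2; exact add_right_cancel h2
        rw [hg, this]
    · rw [ind_neg h1]; simp
  · simp

lemma exists_kappa {χ : ι → GG} (hm : 0 < m) (hχ : Hχ blk χ) :
    ∃ κ : Vx blk m → GG, ∀ g v, κ (act χ g v) = g + κ v := by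
  have h : ∀ a : ι → ℕ, (∀ b, ∃ k, blk k = b ∧ a k = m) → ∃ p : Fin 3 → ι, ∀ b, blk (p b) = b ∧ a (p b) = m := by
    intro a h
    choose p hp using h
    exact ⟨p, hp⟩
  choose P hP using h
  let A : Vx blk m → ι → ℕ := fun v k => (v.1 k).natAbs
  have hA : ∀ v : Vx blk m, ∀ b, ∃ k, blk k = b ∧ A v k = m := by
    intro v b
    obtain ⟨k, hk, hk'⟩ := vm v b
    exact ⟨k, hk, by simp only [A]; omega⟩
  have hAg : ∀ g v, A (act χ g v) = A v := by
    intro g v; funext k; simp only [A, act]; split_ifs <;> simp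
  have hPe : ∀ a a' ha ha', a = a' → P a ha = P a' ha' := by
    intro a a' ha ha' e; subst e; rfl
  have hk : ∀ v : Vx blk m, ∃ g : GG, ∀ b, χ (P (A v) (hA v) b) ⬝ᵥ g = if 0 < v.1 (P (A v) (hA v) b) then 0 else 1 := by
    intro v
    obtain ⟨g, hg⟩ := (hχ (P (A v) (hA v)) (fun b => (hP _ _ b).1)).2
      (fun b => if 0 < v.1 (P (A v) (hA v) b) then 0 else 1)
    exact ⟨g, fun b => congrFun hg b⟩
  choose κ hκ using hk
  refine ⟨κ, fun g v => ?_⟩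
  apply (hχ (P (A v) (hA v)) (fun b => (hP _ _ b).1)).1
  funext b
  have h1 := hκ (act χ g v) b
  rw [hPe _ _ _ (hA v) (hAg g v)] at h1
  have h2 := hκ v b
  have h3 := (hP (A v) (hA v) b).2
  dsimp only
  rw [dotProduct_add, h1, h2]
  generalize P (A v) (hA v) b = k at *
  simp only [A] at h3
  simp only [act]
  rcases z2cases (χ k ⬝ᵥ g) with h | h
  · simp [h]
  · simp only [h, one_ne_zero, if_false]
    rcases lt_trichotomy (v.1 k) 0 with h4 | h4 | h4
    · rw [if_pos (by omega), if_neg (by omega)]; rfl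
    · omega
    · rw [if_neg (by omega), if_pos (by omega)]; rfl

end BU
open Matrix
set_option linter.unusedSectionVars false
set_option linter.unusedSimpArgs false
namespace BU
open Finset

abbrev Ix (A B : ℕ) := Fin A ⊕ Fin B ⊕ Fin 9

def bk {A B : ℕ} : Ix A B → Fin 3
  | .inl _ => 0
  | .inr (.inl _) => 1
  | .inr (.inr _) => 2

def fch : Fin 9 → GG := ![![0,0,1], ![0,0,1], ![0,0,1], ![1,1,1], ![1,1,1], ![1,0,1], ![1,0,1], ![0,1,1], ![0,1,1]]

def ch {A B : ℕ} : Ix A B → GG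
  | .inl _ => ![1,0,0]
  | .inr (.inl _) => ![0,1,0]
  | .inr (.inr c) => fch c

variable {A B : ℕ}

lemma fch2 (c : Fin 9) : fch c 2 = 1 := by revert c; decide

lemma hch : Hχ (bk (A := A) (B := B)) ch := by
  intro p hp
  rw [← Finite.injective_iff_bijective]
  obtain ⟨x, hx⟩ : ∃ x, p 0 = .inl x := by
    have := hp 0
    rcases h : p 0 with x | x | x <;> rw [h] at this <;> simp [bk] at this ⊢
  obtain ⟨y, hy⟩ : ∃ x, p 1 = .inr (.inl x) := by
    have := hp 1
    rcases h : p 1 with x | x | x <;> rw [h] at this <;> simp [bk] at this ⊢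
  obtain ⟨c, hc⟩ : ∃ x, p 2 = .inr (.inr x) := by
    have := hp 2
    rcases h : p 2 with x | x | x <;> rw [h] at this <;> simp [bk] at this ⊢
  intro g g' h
  have h0 := congrFun h 0
  have h1 := congrFun h 1
  have h2 := congrFun h 2
  simp only [hx, hy, hc, ch, dotProduct, Fin.sum_univ_three, fch2] at h0 h1 h2
  simp at h0 h1 h2
  rw [h0, h1] at h2
  have h2 := add_left_cancel h2
  funext b
  fin_cases b <;> assumption

def HasN {m : ℕ} (κ : Vx (bk (A := A) (B := B)) m → GG) (J : Finset (Ix A B)) (v : ZMod 2) : Prop :=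
  ∀ r, J.card = r + 3 → ∀ s : Fin r → Vx (bk (A := A) (B := B)) m → ZMod 2,
    (∀ i, IsCh ch ![0,0,1] (s i)) → NN κ J s = v

variable {m : ℕ} {κ : Vx (bk (A := A) (B := B)) m → GG}

lemma hasN_step (hm : 0 < m) (hκ : ∀ g v, κ (act ch g v) = g + κ v) {J : Finset (Ix A B)} (hJ : 4 ≤ J.card)
    (K : Finset (Ix A B)) (hK : K ⊆ J) (hs : ∑ k ∈ K, ch k = ![0,0,1]) (w : Ix A B → ZMod 2)
    (hw : ∀ k ∈ K, HasN κ (J.erase k) (w k)) : HasN κ J (∑ k ∈ K, w k) := by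
  intro r hr s hch
  obtain ⟨r, rfl⟩ : ∃ r', r = r' + 1 := ⟨r - 1, by omega⟩
  obtain ⟨s0, s', rfl⟩ : ∃ s0 s', s = Fin.cons s0 s' := ⟨s 0, Fin.tail s, (Fin.cons_self_tail s).symm⟩
  have h0 := hch 0
  have h1 : ∀ i, IsCh ch ![0,0,1] (s' i) := fun i => by simpa using hch i.succ
  rw [NN_R1 hm hκ J hr K hK s0 (by rw [hs]; simpa using h0) s' (fun i => ⟨_, h1 i⟩)]
  apply Finset.sum_congr rfl; intro k hk
  apply hw k hk r _ _ h1
  rw [Finset.card_erase_of_mem (hK hk)]; omega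

def Jf (Z : Finset (Fin A)) (F : Finset (Fin B)) (C : Finset (Fin 9)) : Finset (Ix A B) := Z.disjSum (F.disjSum C)

lemma Jf_card (Z : Finset (Fin A)) (F : Finset (Fin B)) (C : Finset (Fin 9)) :
    (Jf Z F C).card = Z.card + F.card + C.card := by simp [Jf, add_assoc]
lemma Jf_e0 (Z : Finset (Fin A)) (F : Finset (Fin B)) (C : Finset (Fin 9)) (z : Fin A) :
    (Jf Z F C).erase (.inl z) = Jf (Z.erase z) F C := by
  ext x; rcases x with x | x | x <;> simp [Jf]
lemma Jf_e1 (Z : Finset (Fin A)) (F : Finset (Fin B)) (C : Finset (Fin 9)) (z : Fin B) :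
    (Jf Z F C).erase (.inr (.inl z)) = Jf Z (F.erase z) C := by
  ext x; rcases x with x | x | x <;> simp [Jf]
lemma Jf_e2 (Z : Finset (Fin A)) (F : Finset (Fin B)) (C : Finset (Fin 9)) (z : Fin 9) :
    (Jf Z F C).erase (.inr (.inr z)) = Jf Z F (C.erase z) := by
  ext x; rcases x with x | x | x <;> simp [Jf]

lemma hasN_Z (hm : 0 < m) (F : Finset (Fin B)) (C : Finset (Fin 9)) : HasN κ (Jf (∅ : Finset (Fin A)) F C) 0 := by
  intro r _ s _
  apply NN_miss hm κ _ 0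
  intro k hk
  rcases k with x | x | x <;> simp [Jf, bk] at *
lemma hasN_F (hm : 0 < m) (Z : Finset (Fin A)) (C : Finset (Fin 9)) : HasN κ (Jf Z (∅ : Finset (Fin B)) C) 0 := by
  intro r _ s _
  apply NN_miss hm κ _ 1
  intro k hk
  rcases k with x | x | x <;> simp [Jf, bk] at *
lemma hasN_C (hm : 0 < m) (Z : Finset (Fin A)) (F : Finset (Fin B)) : HasN κ (Jf Z F ∅) 0 := by
  intro r _ s _
  apply NN_miss hm κ _ 2
  intro k hk
  rcases k with x | x | x <;> simp [Jf, bk] at *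

def v0 (i j : ℕ) : ZMod 2 := if i = 1 ∧ j = 1 then 1 else 0

def stp (a b : ZMod 2) (v : ℕ → ℕ → ZMod 2) : ℕ → ℕ → ZMod 2
  | 0, _ => 0
  | _+1, 0 => 0
  | i+1, j+1 => v (i+1) (j+1) + a * stp a b v i (j+1) + b * stp a b v (i+1) j
termination_by i j => i + j

lemma stp_0 (a b : ZMod 2) (v : ℕ → ℕ → ZMod 2) (j : ℕ) : stp a b v 0 j = 0 := by rw [stp]
lemma stp_1 (a b : ZMod 2) (v : ℕ → ℕ → ZMod 2) (i : ℕ) : stp a b v i 0 = 0 := by cases i <;> rw [stp]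
lemma stp_2 (a b : ZMod 2) (v : ℕ → ℕ → ZMod 2) (i j : ℕ) : stp a b v (i+1) (j+1) =
   v (i+1) (j+1) + a * stp a b v i (j+1) + b * stp a b v (i+1) j := by rw [stp]

lemma hasN_v0 (hm : 0 < m) (hκ : ∀ g v, κ (act ch g v) = g + κ v) (Z : Finset (Fin A)) (F : Finset (Fin B)) :
    HasN κ (Jf Z F {0}) (v0 Z.card F.card) := by
  rcases Z.eq_empty_or_nonempty with rfl | hZ
  · exact hasN_Z hm _ _
  rcases F.eq_empty_or_nonempty with rfl | hF
  · simpa [v0] using hasN_F hm _ _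
  have h1 := hZ.card_pos
  have h2 := hF.card_pos
  by_cases h : Z.card = 1 ∧ F.card = 1
  · obtain ⟨z, rfl⟩ := Finset.card_eq_one.1 h.1
    obtain ⟨f, rfl⟩ := Finset.card_eq_one.1 h.2
    intro r hr s _
    rw [Jf_card] at hr
    simp at hr
    subst hr
    simp only [v0, h, and_self, if_true]
    apply NN_base hm hch hκ ![.inl z, .inr (.inl f), .inr (.inr 0)]
    · intro b; fin_cases b <;> rfl
    · intro k
      rcases k with x | x | x <;> simp [Jf, bk]
  · have := hasN_step hm hκ (J := Jf Z F {0}) (by rw [Jf_card]; simp; omega) {.inr (.inr 0)}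
      (by simp [Jf]) (by simp [ch, fch]) (fun _ => 0) (by
        intro k hk
        rw [Finset.mem_singleton] at hk; subst hk
        rw [Jf_e2]; exact hasN_C hm _ _)
    simpa [v0, h] using this

lemma hasN_stp (hm : 0 < m) (hκ : ∀ g v, κ (act ch g v) = g + κ v) (C : Finset (Fin 9)) (hC : C.Nonempty)
    (c : Fin 9) (hc : c ∉ C) (a b : ZMod 2) (hab : fch c = ![a, b, 1]) (v : ℕ → ℕ → ZMod 2)
    (hv : ∀ (Z : Finset (Fin A)) (F : Finset (Fin B)), HasN κ (Jf Z F C) (v Z.card F.card)) :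
    ∀ (Z : Finset (Fin A)) (F : Finset (Fin B)), HasN κ (Jf Z F (insert c C)) (stp a b v Z.card F.card) := by
  intro Z F
  induction hn : Z.card + F.card using Nat.strong_induction_on generalizing Z F with
  | _ n ih =>
  rcases Z.eq_empty_or_nonempty with rfl | ⟨z, hz⟩
  · rw [Finset.card_empty, stp_0]; exact hasN_Z hm _ _
  rcases F.eq_empty_or_nonempty with rfl | ⟨f, hf⟩
  · rw [Finset.card_empty, stp_1]; exact hasN_F hm _ _
  have h1 := Finset.card_pos.2 ⟨z, hz⟩
  have h2 := Finset.card_pos.2 ⟨f, hf⟩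
  have h3 := hC.card_pos
  have hZ := ih _ (by rw [Finset.card_erase_of_mem hz]; omega) (Z.erase z) F rfl
  have hF := ih _ (by rw [Finset.card_erase_of_mem hf]; omega) Z (F.erase f) rfl
  have h0 := hv Z F
  have step := hasN_step hm hκ (J := Jf Z F (insert c C)) (by rw [Jf_card, Finset.card_insert_of_notMem hc]; omega)
  obtain ⟨i, hi⟩ : ∃ i, Z.card = i + 1 := ⟨Z.card - 1, by omega⟩
  obtain ⟨j, hj⟩ : ∃ i, F.card = i + 1 := ⟨F.card - 1, by omega⟩
  rw [Finset.card_erase_of_mem hz, hi, hj] at hZ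
  rw [Finset.card_erase_of_mem hf, hi, hj] at hF
  rw [hi, hj] at h0
  rw [hi, hj, stp_2]
  simp only [Nat.add_sub_cancel] at hZ hF
  let w : Ix A B → ZMod 2 := fun k => match k with
    | .inl _ => stp a b v i (j+1)
    | .inr (.inl _) => stp a b v (i+1) j
    | .inr (.inr _) => v (i+1) (j+1)
  have hw : ∀ k, (k = .inl z ∨ k = .inr (.inl f) ∨ k = .inr (.inr c)) → HasN κ ((Jf Z F (insert c C)).erase k) (w k) := by
    rintro k (rfl | rfl | rfl)
    · rw [Jf_e0]; exact hZ
    · rw [Jf_e1]; exact hF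
    · rw [Jf_e2, Finset.erase_insert hc]; exact h0
  have t1 : (1 : ZMod 2) + 1 = 0 := z2 1
  rcases z2cases a with rfl | rfl <;> rcases z2cases b with rfl | rfl
  · have := step {.inr (.inr c)} (by simp [Jf]) (by simp [ch, hab]) w (by
      intro k hk; apply hw; simp at hk; tauto)
    simpa [w] using this
  · have := step {.inr (.inr c), .inr (.inl f)} (by simp [Jf, Finset.insert_subset_iff, hf]) (by
      simp [ch, hab, Finset.sum_insert, t1]) w (by
      intro k hk; apply hw; simp at hk; tauto)
    simpa [w, Finset.sum_insert] using this
  · have := step {.inr (.inr c), .inl z} (by simp [Jf, Finset.insert_subset_iff, hz]) (by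
      simp [ch, hab, Finset.sum_insert, t1]) w (by
      intro k hk; apply hw; simp at hk; tauto)
    simpa [w, Finset.sum_insert] using this
  · have := step {.inr (.inr c), .inl z, .inr (.inl f)} (by simp [Jf, Finset.insert_subset_iff, hz, hf]) (by
      simp [ch, hab, Finset.sum_insert, t1]) w (by
      intro k hk; apply hw; simp at hk; tauto)
    simpa [w, Finset.sum_insert, add_assoc] using this

/-! parity -/
lemma stpf : ∀ i j, stp 1 1 v0 (i+1) (j+1) = ((i+j).choose i : ZMod 2) := by
  intro i j
  induction hn : i + j using Nat.strong_induction_on generalizing i j with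
  | _ n ih =>
  subst hn
  rw [stp_2]
  rcases i with _ | i <;> rcases j with _ | j
  · simp [stp_0, stp_1, v0]
  · rw [stp_0, ih (0+j) (by omega) 0 j rfl]; simp [v0]
  · rw [stp_1, ih (i+0) (by omega) i 0 rfl]; simp [v0]
  · rw [ih (i+(j+1)) (by omega) i (j+1) rfl, ih (i+1+j) (by omega) (i+1) j rfl]
    rw [show i+1+(j+1) = (i+j+1)+1 by ring, Nat.choose_succ_succ, show i+(j+1)=i+j+1 by ring, show i+1+j=i+j+1 by ring]
    simp [v0]

lemma stpg : ∀ i j, stp 1 1 (stp 1 1 v0) (i+1) (j+1) = (i+j+1 : ℕ) * ((i+j).choose i : ZMod 2) := by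
  intro i j
  induction hn : i + j using Nat.strong_induction_on generalizing i j with
  | _ n ih =>
  subst hn
  rw [stp_2, stpf]
  rcases i with _ | i <;> rcases j with _ | j
  · simp [stp_0, stp_1]
  · rw [stp_0, ih (0+j) (by omega) 0 j rfl]; simp; ring
  · rw [stp_1, ih (i+0) (by omega) i 0 rfl]; simp; ring
  · rw [ih (i+(j+1)) (by omega) i (j+1) rfl, ih (i+1+j) (by omega) (i+1) j rfl]
    rw [show i+1+(j+1) = (i+j+1)+1 by ring, Nat.choose_succ_succ, show i+(j+1)=i+j+1 by ring, show i+1+j=i+j+1 by ring]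
    push_cast; ring

lemma choose_dbl (n k : ℕ) : ((2*n).choose (2*k) : ZMod 2) = (n.choose k : ZMod 2) := by
  have : Fact (Nat.Prime 2) := ⟨Nat.prime_two⟩
  have := Choose.choose_modEq_choose_mod_mul_choose_div_nat (p := 2) (n := 2*n) (k := 2*k)
  simp at this
  exact (ZMod.natCast_eq_natCast_iff _ _ 2).2 this

def G2 : ℕ → ℕ → ZMod 2 := stp 1 1 (stp 1 1 v0)

lemma G2_ee (a b : ℕ) : G2 (2*a+1) (2*b+1) = ((a+b).choose a : ZMod 2) := by
  rw [G2, stpg, ← Nat.mul_add, choose_dbl]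
  push_cast
  have : (2 : ZMod 2) = 0 := rfl
  rw [this]; ring

lemma G2_eo (a b : ℕ) : G2 (2*a+1) (2*b+2) = 0 := by
  rw [G2, stpg]
  push_cast
  have : (2 : ZMod 2) = 0 := rfl
  rw [this]; simp; left; exact z2 1
lemma G2_oe (a b : ℕ) : G2 (2*a+2) (2*b+1) = 0 := by
  rw [G2, stpg]
  push_cast
  have : (2 : ZMod 2) = 0 := rfl
  rw [this]; simp; left; exact z2 1

lemma U_val (a b : ℕ) : stp 0 1 (stp 0 1 G2) (2*a+1) (2*b+1) = ((a+b+1).choose b : ZMod 2) := by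
  induction b with
  | zero =>
    have := G2_ee a 0
    simp only [mul_zero, zero_add, add_zero, Nat.choose_self] at this
    simp [stp_2, stp_1]; simpa using this
  | succ b ih =>
    rw [show 2*(b+1)+1 = (2*b+1+1)+1 by ring, stp_2, stp_2 (j := 2*b+1), ih, stp_2 (j := 2*b+1+1),
      show 2*b+1+1+1 = 2*(b+1)+1 by ring, G2_ee]
    rw [show a+(b+1)+1 = (a+b+1)+1 by ring, Nat.choose_succ_succ]
    rw [show a + (b+1) = a + b + 1 by ring]
    have : (a+b+1).choose (b+1) = (a+b+1).choose a := by
      rw [← Nat.choose_symm_of_eq_add]; ring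
    rw [this]
    push_cast
    linear_combination z2 (stp 0 1 G2 (2*a+1) (2*b+1+1))

lemma U_val' (a b : ℕ) : stp 1 0 (stp 1 0 G2) (2*a+1) (2*b+1) = ((a+b+1).choose a : ZMod 2) := by
  induction a with
  | zero =>
    have := G2_ee 0 b
    simp only [mul_zero, zero_add, add_zero, Nat.choose_zero_right] at this
    simp [stp_2, stp_0]; simpa using this
  | succ a ih =>
    rw [show 2*(a+1)+1 = (2*a+1+1)+1 by ring, stp_2, stp_2 (i := 2*a+1), ih, stp_2 (i := 2*a+1+1),
      show 2*a+1+1+1 = 2*(a+1)+1 by ring, G2_ee]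
    rw [show a+1+b+1 = (a+b+1)+1 by ring, Nat.choose_succ_succ]
    rw [show a + 1 +b = a + b + 1 by ring]
    push_cast
    linear_combination z2 (stp 1 0 G2 (2*a+1+1) (2*b+1))


lemma hasN_G2 (hm : 0 < m) (hκ : ∀ g v, κ (act ch g v) = g + κ v) :
    ∀ (Z : Finset (Fin A)) (F : Finset (Fin B)), HasN κ (Jf Z F {4,3,0}) (G2 Z.card F.card) := by
  unfold G2
  refine hasN_stp hm hκ {3,0} (by simp) 4 (by decide) 1 1 rfl _ ?_
  refine hasN_stp hm hκ {0} (by simp) 3 (by decide) 1 1 rfl _ ?_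
  exact hasN_v0 hm hκ

lemma hasN_U (hm : 0 < m) (hκ : ∀ g v, κ (act ch g v) = g + κ v) (Z : Finset (Fin A)) (F : Finset (Fin B)) :
    HasN κ (Jf Z F {2,1,8,7,4,3,0}) (stp 0 0 (stp 0 0 (stp 0 1 (stp 0 1 G2))) Z.card F.card) := by
  revert Z F
  refine hasN_stp hm hκ {1,8,7,4,3,0} (by simp) 2 (by decide) 0 0 rfl _ ?_
  refine hasN_stp hm hκ {8,7,4,3,0} (by simp) 1 (by decide) 0 0 rfl _ ?_
  refine hasN_stp hm hκ {7,4,3,0} (by simp) 8 (by decide) 0 1 rfl _ ?_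
  refine hasN_stp hm hκ {4,3,0} (by simp) 7 (by decide) 0 1 rfl _ ?_
  exact hasN_G2 hm hκ

lemma hasN_U' (hm : 0 < m) (hκ : ∀ g v, κ (act ch g v) = g + κ v) (Z : Finset (Fin A)) (F : Finset (Fin B)) :
    HasN κ (Jf Z F {2,1,6,5,4,3,0}) (stp 0 0 (stp 0 0 (stp 1 0 (stp 1 0 G2))) Z.card F.card) := by
  revert Z F
  refine hasN_stp hm hκ {1,6,5,4,3,0} (by simp) 2 (by decide) 0 0 rfl _ ?_
  refine hasN_stp hm hκ {6,5,4,3,0} (by simp) 1 (by decide) 0 0 rfl _ ?_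
  refine hasN_stp hm hκ {5,4,3,0} (by simp) 6 (by decide) 1 0 rfl _ ?_
  refine hasN_stp hm hκ {4,3,0} (by simp) 5 (by decide) 1 0 rfl _ ?_
  exact hasN_G2 hm hκ

lemma NN_full {a b : ℕ} {κ : Vx (bk (A := 2*a+1) (B := 2*b+1)) m → GG} (hm : 0 < m)
    (hκ : ∀ g v, κ (act ch g v) = g + κ v)
    (h1 h2 : Vx (bk (A := 2*a+1) (B := 2*b+1)) m → ZMod 2)
    (hh1 : IsCh ch ![1,1,0] h1) (hh2 : IsCh ch ![1,1,0] h2)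
    (s : Fin (2*a+2*b+6) → Vx (bk (A := 2*a+1) (B := 2*b+1)) m → ZMod 2) (hs : ∀ i, IsCh ch ![0,0,1] (s i)) :
    NN κ univ (Fin.cons h1 (Fin.cons h2 s : Fin (2*a+2*b+6+1) → _) : Fin (2*a+2*b+6+1+1) → _) =
      ((a+b+1).choose b + (a+b+1).choose a : ZMod 2) := by
  have t1 : (1 : ZMod 2) + 1 = 0 := z2 1
  have huniv : (univ : Finset (Ix (2*a+1) (2*b+1))) = Jf univ univ univ := by
    ext x; rcases x with x | x | x <;> simp [Jf]
  have hc : ∀ x y : Fin 9, x ∈ ({5,6} : Finset (Fin 9)) → y ∈ ({7,8} : Finset (Fin 9)) → fch x + fch y = ![1,1,0] := by decide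
  rw [huniv, NN_R1 hm hκ _ (by rw [Jf_card]; simp; ring) {.inr (.inr 5), .inr (.inr 7)} (by simp [Jf, Finset.insert_subset_iff])
    h1 (by simpa [Finset.sum_insert, ch, hc] using hh1) _ (by
      intro i; refine Fin.cases ?_ (fun i => ?_) i
      · exact ⟨_, hh2⟩
      · exact ⟨_, hs i⟩)]
  rw [Finset.sum_insert (by simp), Finset.sum_singleton, Jf_e2, Jf_e2]
  have c1 : ((univ : Finset (Fin 9)).erase 5).card = 8 := by decide
  have c2 : ((univ : Finset (Fin 9)).erase 7).card = 8 := by decide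
  rw [NN_R1 hm hκ _ (by rw [Jf_card, c1]; simp; ring) {.inr (.inr 6), .inr (.inr 7)} (by simp [Jf, Finset.insert_subset_iff])
    h2 (by simpa [Finset.sum_insert, ch, hc] using hh2) s (fun i => ⟨_, hs i⟩)]
  rw [NN_R1 hm hκ _ (by rw [Jf_card, c2]; simp; ring) {.inr (.inr 5), .inr (.inr 8)} (by simp [Jf, Finset.insert_subset_iff])
    h2 (by simpa [Finset.sum_insert, ch, hc] using hh2) s (fun i => ⟨_, hs i⟩)]
  rw [Finset.sum_insert (by simp), Finset.sum_singleton, Jf_e2, Jf_e2, Finset.sum_insert (by simp), Finset.sum_singleton, Jf_e2, Jf_e2]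
  rw [show ((univ : Finset (Fin 9)).erase 5).erase 6 = {2,1,8,7,4,3,0} by decide]
  rw [show ((univ : Finset (Fin 9)).erase 7).erase 8 = {2,1,6,5,4,3,0} by decide]
  rw [show ((univ : Finset (Fin 9)).erase 7).erase 5 = (univ.erase 5).erase 7 by decide]
  have hcard : ({2,1,8,7,4,3,0} : Finset (Fin 9)).card = 7 := by decide
  have hcard' : ({2,1,6,5,4,3,0} : Finset (Fin 9)).card = 7 := by decide
  have e1 := hasN_U hm hκ univ univ (2*a+2*b+6) (by rw [Jf_card, hcard]; simp; ring) s hs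
  have e2 := hasN_U' hm hκ univ univ (2*a+2*b+6) (by rw [Jf_card, hcard']; simp; ring) s hs
  rw [e1, e2]
  simp only [Finset.card_univ, Fintype.card_fin]
  rw [stp_2, stp_2 0 0 _ (2*a) (2*b), U_val, stp_2, stp_2 0 0 _ (2*a) (2*b), U_val']
  linear_combination z2 (NN κ (Jf univ univ ((univ.erase 5).erase 7)) s)

lemma choose_odd (k : ℕ) : ∀ j, j < 2^k → (((2^k-1).choose j : ℕ) : ZMod 2) = 1 := by
  intro j
  induction j with
  | zero => simp
  | succ j ih =>
    intro hj
    have h1 := ih (by omega)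
    have h2 : ((2^k).choose (j+1) : ZMod 2) = 0 := by
      rw [ZMod.natCast_eq_zero_iff]
      exact Nat.Prime.dvd_choose_pow Nat.prime_two (by omega) (by omega)
    obtain ⟨N, hN⟩ : ∃ N, 2^k = N + 1 := ⟨2^k-1, by omega⟩
    rw [hN] at h1 h2 ⊢
    rw [Nat.choose_succ_succ] at h2
    simp only [Nat.add_sub_cancel] at *
    push_cast at h2
    rw [h1] at h2
    rw [eq_neg_of_add_eq_zero_right h2, CharTwo.neg_eq]

lemma final_odd (k n : ℕ) (hk : 2 ≤ k) (hn : n = 2^k) :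
    (((n-2)+(n-1)+1).choose (n-1) + ((n-2)+(n-1)+1).choose (n-2) : ZMod 2) ≠ 0 := by
  have h4 : 4 ≤ n := by
    rw [hn]; calc 4 = 2^2 := rfl
      _ ≤ 2^k := Nat.pow_le_pow_right (by omega) hk
  obtain ⟨p, rfl⟩ : ∃ p, n = p + 2 := ⟨n-2, by omega⟩
  have := choose_odd (k+1) (p+1) (by rw [pow_succ]; omega)
  have e : 2^(k+1) - 1 = (2*p+2)+1 := by rw [pow_succ]; omega
  rw [e, Nat.choose_succ_succ] at this
  simp only [Nat.add_sub_cancel, show p+2-1 = p+1 by omega, show p+(p+1)+1 = 2*p+2 by ring]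
  push_cast at this
  rw [add_comm, this]
  exact one_ne_zero

end BU
open Matrix
set_option linter.unusedSectionVars false
set_option linter.unusedSimpArgs false
namespace BU
open Finset

/-- real action -/
def ract {A B : ℕ} (g : GG) (x : Ix A B → ℝ) : Ix A B → ℝ := fun k => if ch k ⬝ᵥ g = 0 then x k else - x k

def REq {A B : ℕ} (ψ : GG) (Φ : (Ix A B → ℝ) → ℝ) : Prop :=
  ∀ g x, Φ (ract g x) = if ψ ⬝ᵥ g = 0 then Φ x else - Φ x

variable {A B : ℕ} {m : ℕ}

noncomputable def emb (v : Vx (bk (A := A) (B := B)) m) : Ix A B → ℝ := fun k => (v.1 k : ℝ) / m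

lemma emb_act (g : GG) (v : Vx (bk (A := A) (B := B)) m) : emb (act ch g v) = ract g (emb v) := by
  funext k
  simp only [emb, act, ract]
  split_ifs
  · rfl
  · push_cast; ring

noncomputable def sf (κ : Vx (bk (A := A) (B := B)) m → GG) (ψ : GG) (Φ : (Ix A B → ℝ) → ℝ)
    (v : Vx (bk (A := A) (B := B)) m) : ZMod 2 :=
  if 0 < Φ (emb v) then 0 else if Φ (emb v) < 0 then 1 else ψ ⬝ᵥ κ v

lemma sf_ch {κ : Vx (bk (A := A) (B := B)) m → GG} (hκ : ∀ g v, κ (act ch g v) = g + κ v) {ψ : GG}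
    {Φ : (Ix A B → ℝ) → ℝ} (hΦ : REq ψ Φ) : IsCh ch ψ (sf κ ψ Φ) := by
  intro g v
  unfold sf
  rw [hκ, dotProduct_add, emb_act, hΦ]
  rcases z2cases (ψ ⬝ᵥ g) with h | h
  · simp [h]
  · simp only [h, one_ne_zero, if_false]
    rcases lt_trichotomy (Φ (emb v)) 0 with h1 | h1 | h1
    · rw [if_pos (by linarith), if_neg (by linarith), if_pos h1]; rfl
    · rw [if_neg (by linarith), if_neg (by linarith), if_neg (by linarith), if_neg (by linarith)]
    · rw [if_neg (by linarith), if_pos (by linarith), if_pos h1]; rfl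

lemma sf_flip {κ : Vx (bk (A := A) (B := B)) m → GG} {ψ : GG} {Φ : (Ix A B → ℝ) → ℝ}
    {x y : Vx (bk (A := A) (B := B)) m} (h : sf κ ψ Φ x + sf κ ψ Φ y ≠ 0) :
    Φ (emb x) * Φ (emb y) ≤ 0 := by
  by_contra hcon
  push Not at hcon
  apply h
  have : sf κ ψ Φ x = sf κ ψ Φ y := by
    unfold sf
    rcases mul_pos_iff.1 hcon with ⟨h1, h2⟩ | ⟨h1, h2⟩
    · rw [if_pos h1, if_pos h2]
    · rw [if_neg h1.not_gt, if_pos h1, if_neg h2.not_gt, if_pos h2]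
  rw [this]; exact z2 _

def SS (A B : ℕ) : Set (Ix A B → ℝ) :=
  {x | (∀ k, x k ∈ Set.Icc (-1 : ℝ) 1) ∧ ∀ b, ∃ k, bk k = b ∧ |x k| = 1}

lemma SS_compact : IsCompact (SS A B) := by
  have h1 : IsCompact (Set.pi Set.univ (fun _ : Ix A B => Set.Icc (-1 : ℝ) 1)) :=
    isCompact_univ_pi (fun _ => isCompact_Icc)
  apply h1.of_isClosed_subset
  · unfold SS
    rw [Set.setOf_and]
    apply IsClosed.inter
    · simp only [Set.setOf_forall]
      apply isClosed_iInter; intro k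
      exact isClosed_Icc.preimage (continuous_apply k)
    · simp only [Set.setOf_forall]
      apply isClosed_iInter; intro b
      simp only [Set.setOf_exists]
      apply isClosed_iUnion_of_finite; intro k
      by_cases hk : bk k = b
      · simp only [hk, true_and]
        exact isClosed_eq (continuous_apply k).abs continuous_const
      · simp [hk]
  · intro x hx k _
    exact hx.1 k

lemma emb_SS (hm : 0 < m) (v : Vx (bk (A := A) (B := B)) m) : emb v ∈ SS A B := by
  have hm' : (0 : ℝ) < m := by exact_mod_cast hm
  constructor
  · intro k
    have := vb v k
    have h1 : -(m:ℝ) ≤ v.1 k := by exact_mod_cast this.1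
    have h2 : (v.1 k : ℝ) ≤ m := by exact_mod_cast this.2
    simp only [emb, Set.mem_Icc]
    rw [le_div_iff₀ hm', div_le_iff₀ hm']
    constructor <;> linarith
  · intro b
    obtain ⟨k, hk, hk'⟩ := vm v b
    refine ⟨k, hk, ?_⟩
    simp only [emb]
    rcases hk' with h | h <;> rw [h] <;> push_cast
    · rw [div_self hm'.ne', abs_one]
    · rw [neg_div, div_self hm'.ne', abs_neg, abs_one]

lemma emb_close (hm : 0 < m) {x y : Vx (bk (A := A) (B := B)) m} (h : vle x y) (k) :
    |emb x k - emb y k| ≤ 1 / m := by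
  have hm' : (0 : ℝ) < m := by exact_mod_cast hm
  simp only [emb]
  rw [← sub_div, abs_div, abs_of_pos hm']
  apply div_le_div_of_nonneg_right _ hm'.le
  have h1 := h k
  have : |x.1 k - y.1 k| ≤ 1 := by
    rw [abs_le]; simp only [cle] at h1; omega
  exact_mod_cast this

theorem BUthm {a b : ℕ} (hodd : ((a+b+1).choose b + (a+b+1).choose a : ZMod 2) ≠ 0)
    (Ψ₁ Ψ₂ : (Ix (2*a+1) (2*b+1) → ℝ) → ℝ) (Θ : Fin (2*a+2*b+6) → (Ix (2*a+1) (2*b+1) → ℝ) → ℝ)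
    (c1 : Continuous Ψ₁) (c2 : Continuous Ψ₂) (c3 : ∀ i, Continuous (Θ i))
    (e1 : REq ![1,1,0] Ψ₁) (e2 : REq ![1,1,0] Ψ₂) (e3 : ∀ i, REq ![0,0,1] (Θ i)) :
    ∃ y ∈ SS (2*a+1) (2*b+1), Ψ₁ y = 0 ∧ Ψ₂ y = 0 ∧ ∀ i, Θ i y = 0 := by
  let R := 2*a+2*b+6+1+1
  let Φ : Fin R → (Ix (2*a+1) (2*b+1) → ℝ) → ℝ := Fin.cons Ψ₁ (Fin.cons Ψ₂ Θ : Fin (2*a+2*b+6+1) → _)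
  have cΦ : ∀ i, Continuous (Φ i) := by
    intro i
    refine Fin.cases c1 (fun i => ?_) i
    refine Fin.cases c2 (fun i => ?_) i
    exact c3 i
  have step : ∀ M : ℕ, ∃ σ : Fin (R+1) → Ix (2*a+1) (2*b+1) → ℝ, (∀ i, σ i ∈ SS _ _) ∧
      (∀ i k, |σ i k - σ 0 k| ≤ 1 / ((M : ℝ) + 1)) ∧ ∀ i : Fin R, Φ i (σ i.castSucc) * Φ i (σ i.succ) ≤ 0 := by
    intro M
    obtain ⟨κ, hκ⟩ := exists_kappa (m := M+1) (Nat.succ_pos M) (hch (A := 2*a+1) (B := 2*b+1))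
    have := NN_full (Nat.succ_pos M) hκ (sf κ ![1,1,0] Ψ₁) (sf κ ![1,1,0] Ψ₂) (sf_ch hκ e1) (sf_ch hκ e2)
      (fun i => sf κ ![0,0,1] (Θ i)) (fun i => sf_ch hκ (e3 i))
    rw [← this] at hodd
    unfold NN at hodd
    obtain ⟨σ, _, hσ⟩ := Finset.exists_ne_zero_of_sum_ne_zero hodd
    have hP := right_ne_zero_of_mul hσ
    have hC : Chain univ σ := by
      by_contra hcon
      rw [ind_neg hcon] at hσ; simp at hσ
    refine ⟨fun i => emb (σ i), fun i => emb_SS (Nat.succ_pos M) _, ?_, ?_⟩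
    · intro i k
      have := emb_close (Nat.succ_pos M) (chain_le hC (Fin.zero_le i)) k
      push_cast at this
      exact this
    · unfold PP at hP
      rw [Finset.prod_ne_zero_iff] at hP
      intro i
      have h := hP i (Finset.mem_univ i)
      revert h
      refine Fin.cases ?_ (fun i => ?_) i
      · intro h; exact sf_flip h
      refine Fin.cases ?_ (fun i => ?_) i
      · intro h; exact sf_flip h
      · intro h; exact sf_flip h
  choose σ h1 h2 h3 using step
  obtain ⟨y, hy, φ, hφ, hlim⟩ := SS_compact.tendsto_subseq (fun M => h1 M 0)
  have hl : ∀ i, Filter.Tendsto (fun n => σ (φ n) i) Filter.atTop (nhds y) := by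
    intro i
    rw [tendsto_pi_nhds]
    intro k
    have a1 : Filter.Tendsto (fun n => σ (φ n) 0 k) Filter.atTop (nhds (y k)) := (tendsto_pi_nhds.1 hlim) k
    have a2 : Filter.Tendsto (fun n => σ (φ n) i k - σ (φ n) 0 k) Filter.atTop (nhds 0) := by
      apply squeeze_zero_norm (a := fun n => 1 / (((φ n : ℕ) : ℝ) + 1))
      · intro n; exact h2 (φ n) i k
      · exact (tendsto_one_div_add_atTop_nhds_zero_nat (𝕜 := ℝ)).comp hφ.tendsto_atTop
    have := a2.add a1
    simpa using this
  have hz : ∀ i : Fin R, Φ i y = 0 := by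
    intro i
    have t1 := ((cΦ i).tendsto y).comp (hl i.castSucc)
    have t2 := ((cΦ i).tendsto y).comp (hl i.succ)
    have := le_of_tendsto' (t1.mul t2) (fun n => h3 (φ n) i)
    have h4 := mul_self_nonneg (Φ i y)
    exact mul_self_eq_zero.1 (le_antisymm this h4)
  exact ⟨y, hy, hz 0, hz (Fin.succ 0), fun i => hz i.succ.succ⟩

end BU
open Matrix
set_option linter.unusedSectionVars false
set_option linter.unusedSimpArgs false
namespace BU
open Finset

noncomputable def sgn (t : ZMod 2) : ℝ := if t = 0 then 1 else -1

lemma sgn_add (s t : ZMod 2) : sgn (s + t) = sgn s * sgn t := by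
  rcases z2cases s with rfl | rfl <;> rcases z2cases t with rfl | rfl <;> simp [sgn, z2]

lemma sgn_sq (s : ZMod 2) : sgn s * sgn s = 1 := by
  rcases z2cases s with rfl | rfl <;> simp [sgn]

lemma ite_sgn (t : ZMod 2) (x : ℝ) : (if t = 0 then x else - x) = sgn t * x := by
  unfold sgn; split_ifs <;> simp

noncomputable def TT (m n : ℕ) (x : Fin m → ℝ) : Fin (n+1) → ℂ := fun j =>
  if j.1 = 0 then 0 else
    ⟨if h : 2 * (j.1 - 1) < m then x ⟨_, h⟩ else 0, if h : 2 * (j.1 - 1) + 1 < m then x ⟨_, h⟩ else 0⟩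

lemma TT_zero (m n : ℕ) (x : Fin m → ℝ) : TT m n x 0 = 0 := by simp [TT]

lemma TT_smul (m n : ℕ) (x : Fin m → ℝ) (a : ℝ) : TT m n (fun i => a * x i) = fun j => (a : ℂ) * TT m n x j := by
  funext j
  simp only [TT]
  apply Complex.ext <;> split_ifs <;> simp

lemma TT_cont (m n : ℕ) : Continuous (TT m n) := by
  refine continuous_pi fun j => ?_
  have : (fun x : Fin m → ℝ => TT m n x j) = fun x => (((TT m n x j).re : ℝ) : ℂ) + ((TT m n x j).im : ℝ) * Complex.I := by
    funext x; exact (Complex.re_add_im _).symm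
  rw [this]
  have h1 : Continuous fun x : Fin m → ℝ => (TT m n x j).re := by
    unfold TT
    split_ifs <;> simp <;> fun_prop
  have h2 : Continuous fun x : Fin m → ℝ => (TT m n x j).im := by
    unfold TT
    split_ifs <;> simp <;> fun_prop
  fun_prop

lemma TT_inj (m n : ℕ) (hm : m ≤ 2 * n) (x : Fin m → ℝ) (h : TT m n x = 0) : x = 0 := by
  funext i
  have hi := i.2
  have h1 := congrFun h ⟨i.1 / 2 + 1, by omega⟩
  simp only [TT, Pi.zero_apply] at h1
  rw [if_neg (by omega)] at h1
  have hr := congrArg Complex.re h1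
  have him := congrArg Complex.im h1
  simp only [Complex.zero_re, Complex.zero_im] at hr him
  rcases Nat.mod_two_eq_zero_or_one i.1 with h2 | h2
  · have e : 2 * (i.1 / 2 + 1 - 1) = i.1 := by omega
    rw [dif_pos (by omega)] at hr
    have e2 : (⟨2 * (i.1 / 2 + 1 - 1), by omega⟩ : Fin m) = i := Fin.ext e
    exact e2 ▸ hr
  · have e : 2 * (i.1 / 2 + 1 - 1) + 1 = i.1 := by omega
    rw [dif_pos (by omega)] at him
    have e2 : (⟨2 * (i.1 / 2 + 1 - 1) + 1, by omega⟩ : Fin m) = i := Fin.ext e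
    exact e2 ▸ him

noncomputable def WM {n : ℕ} (z f : Fin (n+1) → ℂ) : Matrix (Fin (n+1)) (Fin 3) ℂ :=
  Matrix.of fun i => ![z i, f i, if i = 0 then 1 else 0]

noncomputable def CM (c : Fin 9 → ℝ) : Matrix (Fin 3) (Fin 3) ℂ :=
  !![(c 1 : ℂ), c 3 + c 4 * Complex.I, c 5 + c 6 * Complex.I;
     c 3 - c 4 * Complex.I, (c 2 : ℂ), c 7 + c 8 * Complex.I;
     c 5 - c 6 * Complex.I, c 7 - c 8 * Complex.I, (c 0 : ℂ)]

lemma CM_herm (c : Fin 9 → ℝ) : (CM c)ᴴ = CM c := by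
  ext i j
  fin_cases i <;> fin_cases j <;> simp [CM, Matrix.conjTranspose_apply, sub_eq_add_neg]

lemma CM_zero (c : Fin 9 → ℝ) (h : CM c = 0) : c = 0 := by
  have e (i j) : CM c i j = 0 := by rw [h]; rfl
  have h0 := e 2 2
  have h1 := e 0 0
  have h2 := e 1 1
  have h3 := e 0 1
  have h4 := e 0 2
  have h5 := e 1 2
  simp [CM, Complex.ext_iff] at h0 h1 h2 h3 h4 h5
  funext i
  fin_cases i <;> simp [*]

noncomputable def XM {n : ℕ} (z f : Fin (n+1) → ℂ) (c : Fin 9 → ℝ) : Matrix (Fin (n+1)) (Fin (n+1)) ℂ :=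
  WM z f * CM c * (WM z f)ᴴ

lemma XM_herm {n : ℕ} (z f : Fin (n+1) → ℂ) (c : Fin 9 → ℝ) : (XM z f c).IsHermitian := by
  unfold XM Matrix.IsHermitian
  simp [Matrix.conjTranspose_mul, CM_herm, Matrix.mul_assoc]

lemma XM_rank {n : ℕ} (z f : Fin (n+1) → ℂ) (c : Fin 9 → ℝ) : (XM z f c).rank ≤ 3 := by
  unfold XM
  refine (Matrix.rank_mul_le_right _ _).trans ?_
  exact (Matrix.rank_le_card_height _).trans (by simp)

open scoped ComplexOrder in
lemma XM_ne {n : ℕ} (z f : Fin (n+1) → ℂ) (c : Fin 9 → ℝ) (hz : z ≠ 0) (hf : f ≠ 0) (hc : c ≠ 0)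
    (z0 : z 0 = 0) (f0 : f 0 = 0) (hzf : star z ⬝ᵥ f = 0) : XM z f c ≠ 0 := by
  intro h
  apply hc
  apply CM_zero
  have hfz : star f ⬝ᵥ z = 0 := by
    rw [Matrix.star_dotProduct, hzf, star_zero]
  have hD : (WM z f)ᴴ * WM z f = Matrix.diagonal ![star z ⬝ᵥ z, star f ⬝ᵥ f, 1] := by
    ext i j
    have key : ((WM z f)ᴴ * WM z f) i j = star (fun l => WM z f l i) ⬝ᵥ (fun l => WM z f l j) := rfl
    rw [key]
    have w0 : (fun l => WM z f l 0) = z := rfl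
    have w1 : (fun l => WM z f l 1) = f := rfl
    have w2 : (fun l => WM z f l 2) = Pi.single 0 1 := by
      funext l; simp [WM, Pi.single_apply]
    fin_cases i <;> fin_cases j <;> simp [w0, w1, w2, hzf, hfz, z0, f0]
  have h2 : (WM z f)ᴴ * XM z f c * WM z f = 0 := by rw [h]; simp
  have h3 : Matrix.diagonal ![star z ⬝ᵥ z, star f ⬝ᵥ f, 1] * CM c * Matrix.diagonal ![star z ⬝ᵥ z, star f ⬝ᵥ f, 1] = 0 := by
    rw [← hD, ← h2]; simp [XM, Matrix.mul_assoc]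
  have hz' : star z ⬝ᵥ z ≠ 0 := by
    rwa [ne_eq, dotProduct_star_self_eq_zero]
  have hf' : star f ⬝ᵥ f ≠ 0 := by
    rwa [ne_eq, dotProduct_star_self_eq_zero]
  ext i j
  have h4 := congrFun (congrFun h3 i) j
  rw [Matrix.mul_diagonal, Matrix.diagonal_mul] at h4
  have hd : ∀ i, (![star z ⬝ᵥ z, star f ⬝ᵥ f, 1] : Fin 3 → ℂ) i ≠ 0 := by
    intro i; fin_cases i <;> simp [hz', hf', hz, hf]
  simpa [hd i, hd j] using h4

lemma XM_act {n : ℕ} (z f : Fin (n+1) → ℂ) (c : Fin 9 → ℝ) (a b d : ℝ) (ha : a * a = 1) (hb : b * b = 1)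
    (c' : Fin 9 → ℝ)
    (hc' : c' = ![d * c 0, d * c 1, d * c 2, a * b * d * c 3, a * b * d * c 4,
       a * d * c 5, a * d * c 6, b * d * c 7, b * d * c 8]) :
    XM (fun i => (a:ℂ) * z i) (fun i => (b:ℂ) * f i) c' = d • XM z f c := by
  have ha' : (a:ℂ) * a = 1 := by exact_mod_cast ha
  have hb' : (b:ℂ) * b = 1 := by exact_mod_cast hb
  set D : Matrix (Fin 3) (Fin 3) ℂ := Matrix.diagonal ![(a:ℂ), b, 1] with hD
  have hDD : D * D = 1 := by
    rw [hD, Matrix.diagonal_mul_diagonal, ← Matrix.diagonal_one]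
    congr 1; funext i; fin_cases i <;> simp [ha', hb']
  have hDs : Dᴴ = D := by
    rw [hD, Matrix.diagonal_conjTranspose]
    congr 1; funext i; fin_cases i <;> simp
  have hW : WM (fun i => (a:ℂ) * z i) (fun i => (b:ℂ) * f i) = WM z f * D := by
    ext i j
    rw [hD, Matrix.mul_diagonal]
    fin_cases j <;> simp [WM, mul_comm]
  have hC : CM c' = d • (D * CM c * D) := by
    ext i j
    rw [Matrix.smul_apply, hD, Matrix.mul_diagonal, Matrix.diagonal_mul, hc']
    fin_cases i <;> fin_cases j <;> simp [CM] <;> first | (left; linear_combination (-(c 1 : ℂ)) * ha') | (left; linear_combination (-(c 2 : ℂ)) * hb') | ring1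
  unfold XM
  rw [hW, hC, Matrix.conjTranspose_mul, hDs]
  simp only [Matrix.mul_smul, Matrix.smul_mul]
  congr 1
  calc WM z f * D * (D * CM c * D) * (D * (WM z f)ᴴ) = WM z f * (D * D) * CM c * (D * D) * (WM z f)ᴴ := by
        simp only [Matrix.mul_assoc]
    _ = _ := by rw [hDD]; simp

lemma XM_cont {n : ℕ} {Y : Type*} [TopologicalSpace Y] (z f : Y → Fin (n+1) → ℂ) (c : Y → Fin 9 → ℝ)
    (hz : Continuous z) (hf : Continuous f) (hc : Continuous c) :
    Continuous fun y => XM (z y) (f y) (c y) := by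
  have hW : Continuous fun y => WM (z y) (f y) := by
    refine continuous_matrix fun i j => ?_
    fin_cases j <;> simp [WM] <;> fun_prop
  have hC : Continuous fun y => CM (c y) := by
    refine continuous_matrix fun i j => ?_
    fin_cases i <;> fin_cases j <;> simp [CM] <;> fun_prop
  unfold XM
  exact (hW.matrix_mul hC).matrix_mul hW.matrix_conjTranspose

lemma eig_le {q : ℕ} (X : Matrix (Fin q) (Fin q) ℂ) (hX : X.IsHermitian) (h : X.rank ≤ 3) :
    (Finset.univ.filter fun i => 0 < hX.eigenvalues i).card + (Finset.univ.filter fun i => hX.eigenvalues i < 0).card ≤ 3 := by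
  rw [hX.rank_eq_card_non_zero_eigs, Fintype.card_subtype] at h
  rw [← Finset.card_union_of_disjoint]
  · refine (Finset.card_le_card ?_).trans h
    intro i hi
    simp only [Finset.mem_union, Finset.mem_filter, Finset.mem_univ, true_and] at hi ⊢
    rcases hi with h | h
    · exact h.ne'
    · exact h.ne
  · rw [Finset.disjoint_filter]
    intro i _ h1 h2
    exact lt_asymm h1 h2

def HH (q : ℕ) : Submodule ℝ (Matrix (Fin q) (Fin q) ℂ) where
  carrier := {X | X.IsHermitian}
  add_mem' := fun h1 h2 => Matrix.IsHermitian.add h1 h2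
  zero_mem' := Matrix.isHermitian_zero
  smul_mem' := fun c X h => by
    change (c • X)ᴴ = c • X
    rw [Matrix.conjTranspose_smul, h.eq]; simp

lemma HH_dim (q : ℕ) : Module.finrank ℝ (HH q) ≤ q ^ 2 := by
  let φ : (HH q × HH q) →ₗ[ℝ] Matrix (Fin q) (Fin q) ℂ :=
    { toFun := fun p => p.1.1 + Complex.I • p.2.1
      map_add' := by intro x y; simp; abel
      map_smul' := by intro r x; simp only [Prod.smul_fst, Prod.smul_snd, Submodule.coe_smul, RingHom.id_apply, smul_add, smul_comm Complex.I r] }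
  have hφ : Function.Injective φ := by
    rw [← LinearMap.ker_eq_bot, LinearMap.ker_eq_bot']
    rintro ⟨⟨A, hA⟩, ⟨B, hB⟩⟩ h
    have h1 : A + Complex.I • B = 0 := h
    have hA' : Aᴴ = A := hA
    have hB' : Bᴴ = B := hB
    have h2 : A - Complex.I • B = 0 := by
      have := congrArg Matrix.conjTranspose h1
      simpa [Matrix.conjTranspose_add, Matrix.conjTranspose_smul, hA', hB', ← sub_eq_add_neg] using this
    have hA0 : A = 0 := by
      have : (2:ℂ) • A = 0 := by
        rw [two_smul]
        calc A + A = (A + Complex.I • B) + (A - Complex.I • B) := by abel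
          _ = 0 := by rw [h1, h2, add_zero]
      simpa using this
    have hB0 : B = 0 := by
      rw [hA0, zero_add] at h1
      simpa using h1
    subst hA0 hB0
    rfl
  have := LinearMap.finrank_le_finrank_of_injective hφ
  rw [Module.finrank_prod, Module.finrank_matrix] at this
  simp [Complex.finrank_real_complex] at this
  nlinarith

lemma exists_pi (q N : ℕ) (L : Submodule ℝ (Matrix (Fin q) (Fin q) ℂ)) (hL : L ≤ HH q)
    (hd : q ^ 2 ≤ Module.finrank ℝ L + N) :
    ∃ π : Matrix (Fin q) (Fin q) ℂ →ₗ[ℝ] (Fin N → ℝ), ∀ X, X.IsHermitian → π X = 0 → X ∈ L := by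
  have h1 : Module.finrank ℝ (HH q ⧸ L.submoduleOf (HH q)) ≤ N := by
    have a := Submodule.finrank_quotient_add_finrank (L.submoduleOf (HH q))
    have b : Module.finrank ℝ (L.submoduleOf (HH q)) = Module.finrank ℝ L :=
      (Submodule.submoduleOfEquivOfLe hL).finrank_eq
    have c := HH_dim q
    omega
  obtain ⟨e, he⟩ : ∃ e : (HH q ⧸ L.submoduleOf (HH q)) →ₗ[ℝ] (Fin N → ℝ), Function.Injective e := by
    let bs := Module.finBasis ℝ (HH q ⧸ L.submoduleOf (HH q))
    let ex : (Fin (Module.finrank ℝ (HH q ⧸ L.submoduleOf (HH q))) → ℝ) →ₗ[ℝ] (Fin N → ℝ) :=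
      { toFun := fun x i => if h : i.1 < Module.finrank ℝ (HH q ⧸ L.submoduleOf (HH q)) then x ⟨i.1, h⟩ else 0
        map_add' := by intro x y; funext i; simp only [Pi.add_apply]; split_ifs <;> simp
        map_smul' := by
          intro r x; funext i; simp only [Pi.smul_apply, RingHom.id_apply]; split_ifs <;> simp }
    have hex : Function.Injective ex := by
      intro x y h
      funext i
      have := congrFun h ⟨i.1, i.2.trans_le h1⟩
      simpa [ex] using this
    exact ⟨ex.comp bs.equivFun.toLinearMap, hex.comp bs.equivFun.injective⟩
  obtain ⟨π, hπ⟩ := (e.comp (L.submoduleOf (HH q)).mkQ).exists_extend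
  refine ⟨π, fun X hX h => ?_⟩
  have h3 := LinearMap.congr_fun hπ ⟨X, hX⟩
  simp at h3
  rw [h] at h3
  have h4 : (L.submoduleOf (HH q)).mkQ ⟨X, hX⟩ = 0 := he (by rw [map_zero]; exact h3.symm)
  rw [Submodule.mkQ_apply, Submodule.Quotient.mk_eq_zero] at h4
  exact h4

end BU
open Matrix
namespace BU
open Finset

lemma matrix_main (k n : ℕ) (hk : 2 ≤ k) (hn : n = 2 ^ k)
    (L : Submodule ℝ (Matrix (Fin (n+1)) (Fin (n+1)) ℂ)) (hL : L ≤ HH (n+1))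
    (hd : (n+1) ^ 2 ≤ Module.finrank ℝ L + 4 * n) :
    ∃ X ∈ L, X ≠ 0 ∧ X.rank ≤ 3 := by
  have h4 : 4 ≤ n := by
    rw [hn]; calc 4 = 2 ^ 2 := rfl
      _ ≤ 2 ^ k := Nat.pow_le_pow_right (by norm_num) hk
  have e4 : 4 * n = 2 * (n-2) + 2 * (n-1) + 6 := by omega
  rw [e4] at hd
  obtain ⟨π, hπ⟩ := exists_pi _ _ L hL hd
  let zz : (Ix (2*(n-2)+1) (2*(n-1)+1) → ℝ) → Fin (n+1) → ℂ := fun y => TT _ n (fun i => y (Sum.inl i))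
  let ff : (Ix (2*(n-2)+1) (2*(n-1)+1) → ℝ) → Fin (n+1) → ℂ := fun y => TT _ n (fun i => y (Sum.inr (Sum.inl i)))
  let cc : (Ix (2*(n-2)+1) (2*(n-1)+1) → ℝ) → Fin 9 → ℝ := fun y i => y (Sum.inr (Sum.inr i))
  have zc : Continuous zz := (TT_cont _ n).comp (by fun_prop)
  have fc : Continuous ff := (TT_cont _ n).comp (by fun_prop)
  have ccc : Continuous cc := by fun_prop
  have rz (g y) : zz (ract g y) = fun i => ((sgn (g 0) : ℝ) : ℂ) * zz y i := by
    simp only [zz]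
    rw [← TT_smul]
    congr 1; funext i
    simp only [ract, ite_sgn]
    simp [ch, dotProduct, Fin.sum_univ_three]
  have rf (g y) : ff (ract g y) = fun i => ((sgn (g 1) : ℝ) : ℂ) * ff y i := by
    simp only [ff]
    rw [← TT_smul]
    congr 1; funext i
    simp only [ract, ite_sgn]
    simp [ch, dotProduct, Fin.sum_univ_three]
  have rX (g y) : XM (zz (ract g y)) (ff (ract g y)) (cc (ract g y)) = sgn (g 2) • XM (zz y) (ff y) (cc y) := by
    rw [rz, rf]
    apply XM_act _ _ _ _ _ _ (sgn_sq _) (sgn_sq _)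
    funext i
    simp only [cc, ract, ite_sgn]
    fin_cases i <;> simp [ch, fch, dotProduct, Fin.sum_univ_three, sgn_add]
  have dotc : Continuous fun y => star (zz y) ⬝ᵥ ff y := by
    simp only [dotProduct]
    refine continuous_finsetSum _ fun i _ => ?_
    exact (((continuous_apply i).comp zc).star).mul ((continuous_apply i).comp fc)
  have rdot (g y) : star (zz (ract g y)) ⬝ᵥ ff (ract g y) = ((sgn (g 0 + g 1) : ℝ) : ℂ) * (star (zz y) ⬝ᵥ ff y) := by
    rw [rz, rf, sgn_add]
    simp only [dotProduct, Finset.mul_sum]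
    refine Finset.sum_congr rfl fun i _ => ?_
    simp
    ring
  have πc : Continuous π := π.continuous_of_finiteDimensional
  obtain ⟨y, hy, h1, h2, h3⟩ := BUthm (final_odd k n hk hn)
    (fun y => (star (zz y) ⬝ᵥ ff y).re) (fun y => (star (zz y) ⬝ᵥ ff y).im)
    (fun i y => π (XM (zz y) (ff y) (cc y)) i)
    (Complex.continuous_re.comp dotc) (Complex.continuous_im.comp dotc)
    (fun i => (continuous_apply i).comp (πc.comp (XM_cont _ _ _ zc fc ccc)))
    (by
      intro g x
      rw [ite_sgn]
      simp only [rdot]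
      simp [dotProduct, Fin.sum_univ_three])
    (by
      intro g x
      rw [ite_sgn]
      simp only [rdot]
      simp [dotProduct, Fin.sum_univ_three])
    (by
      intro i g x
      rw [ite_sgn]
      simp only [rX]
      simp [dotProduct, Fin.sum_univ_three])
  have hz : zz y ≠ 0 := by
    intro h
    have h0 := TT_inj _ n (by omega) _ h
    obtain ⟨k, hk1, hk2⟩ := hy.2 0
    rcases k with i | i | i
    · have := congrFun h0 i
      simp only [Pi.zero_apply] at this
      simp [this] at hk2
    · simp [bk] at hk1
    · simp [bk] at hk1
  have hf : ff y ≠ 0 := by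
    intro h
    have h0 := TT_inj _ n (by omega) _ h
    obtain ⟨k, hk1, hk2⟩ := hy.2 1
    rcases k with i | i | i
    · simp [bk] at hk1
    · have := congrFun h0 i
      simp only [Pi.zero_apply] at this
      simp [this] at hk2
    · simp [bk] at hk1
  have hc : cc y ≠ 0 := by
    intro h0
    obtain ⟨k, hk1, hk2⟩ := hy.2 2
    rcases k with i | i | i
    · simp [bk] at hk1
    · simp [bk] at hk1
    · have := congrFun h0 i
      simp only [Pi.zero_apply, cc] at this
      simp [this] at hk2
  refine ⟨XM (zz y) (ff y) (cc y), hπ _ (XM_herm _ _ _) (funext h3), ?_, XM_rank _ _ _⟩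
  exact XM_ne _ _ _ hz hf hc (TT_zero _ _ _) (TT_zero _ _ _) (Complex.ext h1 h2)

end BU

theorem dim_bound_of_min_inertia_ge_two (k q : ℕ) (hk : 2 ≤ k) (hq : q = 2 ^ k + 1)
    (L : Submodule ℝ (Matrix (Fin q) (Fin q) ℂ))
    (hherm : ∀ X ∈ L, X.IsHermitian)
    (hinertia : ∀ X ∈ L, X ≠ 0 → ∀ hX : Matrix.IsHermitian X,
      2 ≤ posEigCount hX ∧ 2 ≤ negEigCount hX) :
    Module.finrank ℝ L ≤ q ^ 2 - (4 * q - 3) := by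
  obtain ⟨n, hn⟩ : ∃ n, n = 2 ^ k := ⟨_, rfl⟩
  rw [← hn] at hq
  subst hq
  by_contra hcon
  have hd : (n+1) ^ 2 ≤ Module.finrank ℝ L + 4 * n := by omega
  obtain ⟨X, hXL, hX0, hXr⟩ := BU.matrix_main k n hk hn L (fun X hX => hherm X hX) hd
  have h1 := hinertia X hXL hX0 (hherm X hXL)
  have h2 := BU.eig_le X (hherm X hXL) hXr
  unfold posEigCount negEigCount at h1
  omega
end

section
/- For a natural number q ≥ 3, define d(q) = ∏_{j=0}^{q−3} (q+j−1)(q+j) and e(q) = ∏_{j=0}^{q−3} (j+1)(j+2). Then e(q) divides d(q), and the quotient d(q)/e(q) is odd if and only if q = 2^k + 1 for some natural number k ≥ 1. -/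
open Nat in
theorem aux_odd (n : ℕ) : Odd (Nat.choose (2 * n + 1) n) ↔ ∃ k : ℕ, n + 1 = 2 ^ k := by
  induction n using Nat.strong_induction_on with
  | _ n ih =>
    have : Fact (Nat.Prime 2) := ⟨Nat.prime_two⟩
    have h := @Choose.choose_modEq_choose_mod_mul_choose_div_nat (2 * n + 1) n 2 _
    have e1 : (2 * n + 1) % 2 = 1 := by omega
    have e2 : (2 * n + 1) / 2 = n := by omega
    have e3 : Nat.choose 1 (n % 2) = 1 := by
      rcases Nat.mod_two_eq_zero_or_one n with h | h <;> simp [h]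
    rw [e1, e2, e3, one_mul] at h
    have h2 : Odd (Nat.choose (2 * n + 1) n) ↔ Odd (Nat.choose n (n / 2)) := by
      rw [Nat.odd_iff, Nat.odd_iff, h]
    rw [h2]
    rcases Nat.even_or_odd' n with ⟨r, hr | hr⟩
    · rcases Nat.eq_zero_or_pos r with h0 | h0
      · subst h0
        subst hr
        simp only [mul_zero, Nat.zero_div, Nat.choose_self, odd_one, true_iff]
        exact ⟨0, rfl⟩
      · have e : n / 2 = r := by omega
        rw [e, hr, ← Nat.centralBinom_eq_two_mul_choose]
        constructor
        · intro ho
          have := Nat.two_dvd_centralBinom_of_one_le h0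
          rw [Nat.odd_iff] at ho
          omega
        · rintro ⟨k, hk⟩
          rcases k with _ | k
          · omega
          · rw [pow_succ] at hk
            omega
    · have e : n / 2 = r := by omega
      rw [e, hr, ih r (by omega)]
      constructor
      · rintro ⟨k, hk⟩
        exact ⟨k + 1, by rw [pow_succ]; omega⟩
      · rintro ⟨k, hk⟩
        rcases k with _ | k
        · omega
        · exact ⟨k, by rw [pow_succ] at hk; omega⟩

theorem aux_choose (n : ℕ) : Nat.choose (2 * n + 1) n = (2 * n + 1) * catalan n := by
  have h1 := Nat.add_one_mul_choose_eq (2 * n) n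
  have h2 := succ_mul_catalan_eq_centralBinom n
  rw [Nat.centralBinom_eq_two_mul_choose] at h2
  have h3 : Nat.choose (2 * n + 1) (n + 1) = Nat.choose (2 * n + 1) n :=
    Nat.choose_symm_of_eq_add (by omega)
  rw [h3, ← h2] at h1
  apply Nat.eq_of_mul_eq_mul_right (Nat.succ_pos n)
  simp only [Nat.succ_eq_add_one]
  rw [← h1]
  ring

theorem aux_e (n : ℕ) : (∏ j ∈ Finset.range n, (j + 1) * (j + 2)) =
    n.factorial * (n + 1).factorial := by
  induction n with
  | zero => simp
  | succ n ih =>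
    rw [Finset.prod_range_succ, ih, Nat.factorial_succ (n + 1), Nat.factorial_succ n]
    ring

theorem aux_d (n : ℕ) : (∏ j ∈ Finset.range n, (n + 2 + j - 1) * (n + 2 + j)) =
    n.factorial * (n + 1).factorial * (catalan n * Nat.choose (2 * n + 1) n) := by
  have h : (∏ j ∈ Finset.range n, (n + 2 + j - 1) * (n + 2 + j)) =
      (n + 1).ascFactorial n * (n + 1 + 1).ascFactorial n := by
    rw [Nat.ascFactorial_eq_prod_range, Nat.ascFactorial_eq_prod_range, ← Finset.prod_mul_distrib]
    refine Finset.prod_congr rfl fun j _ => ?_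
    have : n + 2 + j - 1 = n + 1 + j := by omega
    rw [this]
  have a1 := Nat.factorial_mul_ascFactorial n n
  have a2 := Nat.factorial_mul_ascFactorial (n + 1) n
  have c1 := Nat.choose_mul_factorial_mul_factorial (show n ≤ 2 * n by omega)
  have c2 := Nat.choose_mul_factorial_mul_factorial (show n ≤ 2 * n + 1 by omega)
  have h2 := succ_mul_catalan_eq_centralBinom n
  rw [Nat.centralBinom_eq_two_mul_choose] at h2
  rw [show 2 * n - n = n by omega, show 2 * n = n + n by omega] at c1
  rw [show 2 * n + 1 - n = n + 1 by omega, show 2 * n + 1 = n + 1 + n by omega] at c2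
  rw [show 2 * n = n + n by omega] at h2
  rw [h, show 2 * n + 1 = n + 1 + n by omega]
  have hp : 0 < n.factorial * (n + 1).factorial := by positivity
  apply Nat.eq_of_mul_eq_mul_left hp
  calc _ = (n.factorial * (n + 1).ascFactorial n) *
        ((n + 1).factorial * (n + 1 + 1).ascFactorial n) := by ring
    _ = _ := by
      rw [a1, a2, ← c1, ← c2, ← h2, Nat.factorial_succ n]
      ring

theorem degree_odd_iff_pow_two_add_one (q : ℕ) (hq : 3 ≤ q) :
    (∏ j ∈ Finset.range (q - 2), (j + 1) * (j + 2)) ∣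
        (∏ j ∈ Finset.range (q - 2), (q + j - 1) * (q + j)) ∧
      (Odd ((∏ j ∈ Finset.range (q - 2), (q + j - 1) * (q + j)) /
          (∏ j ∈ Finset.range (q - 2), (j + 1) * (j + 2))) ↔
        ∃ k : ℕ, 1 ≤ k ∧ q = 2 ^ k + 1) := by
  obtain ⟨n, rfl⟩ : ∃ n, q = n + 2 := ⟨q - 2, by omega⟩
  rw [show n + 2 - 2 = n by omega, aux_d, aux_e]
  refine ⟨dvd_mul_right _ _, ?_⟩
  rw [Nat.mul_div_cancel_left _ (by positivity)]
  have h : Odd (catalan n * Nat.choose (2 * n + 1) n) ↔ Odd (Nat.choose (2 * n + 1) n) := by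
    rw [Nat.odd_mul, aux_choose, Nat.odd_mul]
    tauto
  rw [h, aux_odd]
  constructor
  · rintro ⟨k, hk⟩
    refine ⟨k, ?_, by omega⟩
    rcases k with _ | k
    · simp at hk; omega
    · omega
  · rintro ⟨k, _, hk⟩
    exact ⟨k, by omega⟩
end
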